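/- arXiv:1105.1084 — 4 statements merged into one kernel-verified Lean document; each statement's English description precedes it below -/
import Mathlib

section
/- Let H = ℂ² with orthonormal basis {|0⟩, |1⟩}, let μ be the normalized Haar measure on 𝕋, let U: 𝕋 → unitaries on ℂ² be U(z) = |0⟩⟨0| + z|1⟩⟨1|, and define M(B) = μ(B)(|0⟩⟨0| + |1⟩⟨1|) + (∫_B conj(z) dμ(z)) |0⟩⟨1| + (∫_B z dμ(z)) |1⟩⟨0| for Borel B ⊆ 𝕋. Then: (a) M is a POVM on (𝕋, ℬ(𝕋)) acting on ℂ²; (b) M is covariant, i.e. U(w) M(B) U(w)* = M(w·B) for all w ∈ 𝕋 and Borel B; (c) the second moment operator vanishes: ∫_𝕋 z² dM(z) = 0, i.e. μ-integrating z² against every matrix element of M gives the zero operator; (d) M is an extreme point of the convex set of U-covariant POVMs on (𝕋, ℬ(𝕋)) acting on ℂ², but M is NOT an extreme point of the convex set of all POVMs on (𝕋, ℬ(𝕋)) acting on ℂ². -/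
open MeasureTheory Set ContinuousLinearMap

local notation "⟪" x ", " y "⟫" => @inner ℂ _ _ x y

noncomputable instance : MeasurableSpace Circle := borel Circle
instance : BorelSpace Circle := ⟨rfl⟩

/-- A normalized positive operator valued measure (POVM). -/
structure POVM (Ω : Type*) [MeasurableSpace Ω] (H : Type*) [NormedAddCommGroup H]
    [InnerProductSpace ℂ H] [CompleteSpace H] where
  toFun : Set Ω → (H →L[ℂ] H)
  isPositive : ∀ B : Set Ω, MeasurableSet B → (toFun B).IsPositive
  normalized : toFun Set.univ = 1
  m_iUnion : ∀ B : ℕ → Set Ω, (∀ k, MeasurableSet (B k)) →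
    Pairwise (Function.onFun Disjoint B) → ∀ φ ψ : H,
      HasSum (fun k => ⟪φ, toFun (B k) ψ⟫) ⟪φ, toFun (⋃ k, B k) ψ⟫

noncomputable section

/-- The qubit Hilbert space `ℂ²`. -/
abbrev Qubit : Type := EuclideanSpace ℂ (Fin 2)

/-- The basis vector `|0⟩`. -/
def qzero : Qubit := EuclideanSpace.single 0 1

/-- The basis vector `|1⟩`. -/
def qone : Qubit := EuclideanSpace.single 1 1

/-- The rank-one operator `|a⟩⟨b| : φ ↦ ⟨b, φ⟩ a`. -/
def ketbra (a b : Qubit) : Qubit →L[ℂ] Qubit := (innerSL ℂ b).smulRight a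

/-- The operator `M(B) = μ(B)(|0⟩⟨0| + |1⟩⟨1|) + (∫_B conj z dμ)|0⟩⟨1| + (∫_B z dμ)|1⟩⟨0|`. -/
def Mop (μ : Measure Circle) (B : Set Circle) : Qubit →L[ℂ] Qubit :=
  (((μ B).toReal : ℂ)) • (1 : Qubit →L[ℂ] Qubit)
    + (∫ z in B, (starRingEnd ℂ) (z : ℂ) ∂μ) • ketbra qzero qone
    + (∫ z in B, (z : ℂ) ∂μ) • ketbra qone qzero

/-- The unitary `U(z) = |0⟩⟨0| + z|1⟩⟨1|`. -/
def Uop (w : Circle) : Qubit →L[ℂ] Qubit := ketbra qzero qzero + ((w : ℂ)) • ketbra qone qone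

/-- The density `z ↦ |0⟩⟨0| + |1⟩⟨1| + conj z |0⟩⟨1| + z |1⟩⟨0|` of `M` w.r.t. `μ`. -/
def Dz (z : Circle) : Qubit →L[ℂ] Qubit :=
  (1 : Qubit →L[ℂ] Qubit) + ((starRingEnd ℂ) (z : ℂ)) • ketbra qzero qone
    + ((z : ℂ)) • ketbra qone qzero

/-- `N` is covariant with respect to the representation `U(z) = |0⟩⟨0| + z|1⟩⟨1|`. -/
def QubitCovariant (N : POVM Circle Qubit) : Prop :=
  ∀ w : Circle, ∀ B : Set Circle, MeasurableSet B →
    Uop w ∘L N.toFun B ∘L adjoint (Uop w) = N.toFun ((fun z => w * z) '' B)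

lemma circ_cont : Continuous fun z : Circle => (z : ℂ) := by
  exact continuous_subtype_val

lemma circ_integrable {E : Type*} [NormedAddCommGroup E] (μ : Measure Circle)
    [IsProbabilityMeasure μ] {f : Circle → E} (hf : Continuous f) : Integrable f μ := by
  exact hf.integrable_of_hasCompactSupport (HasCompactSupport.of_compactSpace f)

lemma inner_T (a b c : ℂ) (φ ψ : Qubit) :
    ⟪φ, (a • (1 : Qubit →L[ℂ] Qubit) + b • ketbra qzero qone + c • ketbra qone qzero) ψ⟫ =
      a * (starRingEnd ℂ (φ 0) * ψ 0 + starRingEnd ℂ (φ 1) * ψ 1)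
        + b * (starRingEnd ℂ (φ 0) * ψ 1) + c * (starRingEnd ℂ (φ 1) * ψ 0) := by
  simp [ketbra, qzero, qone, PiLp.inner_apply,
    Fin.sum_univ_two]
  ring

lemma inner_Dz (z : Circle) (φ ψ : Qubit) :
    ⟪φ, Dz z ψ⟫ =
      (starRingEnd ℂ (φ 0) * ψ 0 + starRingEnd ℂ (φ 1) * ψ 1)
        + (starRingEnd ℂ) (z : ℂ) * (starRingEnd ℂ (φ 0) * ψ 1)
        + (z : ℂ) * (starRingEnd ℂ (φ 1) * ψ 0) := by
  have := inner_T 1 ((starRingEnd ℂ) (z : ℂ)) z φ ψ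
  rw [one_smul, one_mul] at this
  exact this

lemma inner_Dz_self (z : Circle) (φ : Qubit) :
    ⟪φ, Dz z φ⟫ = ((Complex.normSq (φ 0 + (starRingEnd ℂ) (z : ℂ) * φ 1) : ℝ) : ℂ) := by
  have h : (starRingEnd ℂ) (z : ℂ) * z = 1 := by
    rw [← Complex.normSq_eq_conj_mul_self]; simp
  rw [inner_Dz, Complex.normSq_eq_conj_mul_self]
  simp only [map_add, map_mul, Complex.conj_conj]
  linear_combination (- starRingEnd ℂ (φ 1) * φ 1) * h

lemma continuous_inner_Dz (φ ψ : Qubit) : Continuous fun z : Circle => ⟪φ, Dz z ψ⟫ := by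
  simp only [inner_Dz]
  have : Continuous fun z : Circle => (z : ℂ) := circ_cont
  have h2 : Continuous fun z : Circle => (starRingEnd ℂ) (z : ℂ) :=
    Complex.continuous_conj.comp this
  fun_prop

def Pop (μ : Measure Circle) (g : Circle → ℝ) (B : Set Circle) : Qubit →L[ℂ] Qubit :=
  (∫ z in B, (g z : ℂ) ∂μ) • (1 : Qubit →L[ℂ] Qubit)
    + (∫ z in B, (g z : ℂ) * (starRingEnd ℂ) (z : ℂ) ∂μ) • ketbra qzero qone
    + (∫ z in B, (g z : ℂ) * (z : ℂ) ∂μ) • ketbra qone qzero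

lemma Pop_one (μ : Measure Circle) (B : Set Circle) : Pop μ (fun _ => 1) B = Mop μ B := by
  simp [Pop, Mop, Measure.real]

lemma Pop_inner (μ : Measure Circle) [IsProbabilityMeasure μ] {g : Circle → ℝ}
    (hg : Continuous g) (B : Set Circle) (φ ψ : Qubit) :
    ⟪φ, Pop μ g B ψ⟫ = ∫ z in B, (g z : ℂ) * ⟪φ, Dz z ψ⟫ ∂μ := by
  have h1 : Continuous fun z : Circle => (z : ℂ) := circ_cont
  have h2 : Continuous fun z : Circle => (starRingEnd ℂ) (z : ℂ) :=
    Complex.continuous_conj.comp h1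
  have hg' : Continuous fun z : Circle => (g z : ℂ) := Complex.continuous_ofReal.comp hg
  rw [Pop, inner_T, ← integral_mul_const, ← integral_mul_const, ← integral_mul_const,
    ← integral_add, ← integral_add]
  · congr 1; ext z; rw [inner_Dz]; ring
  all_goals exact (circ_integrable μ (by fun_prop)).integrableOn

def PopPOVM (μ : Measure Circle) [IsProbabilityMeasure μ] {g : Circle → ℝ}
    (hg : Continuous g) (h0 : ∀ z, 0 ≤ g z) (h1 : ∫ z, (g z : ℂ) ∂μ = 1)
    (h2 : ∫ z, (g z : ℂ) * (starRingEnd ℂ) (z : ℂ) ∂μ = 0)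
    (h3 : ∫ z, (g z : ℂ) * (z : ℂ) ∂μ = 0) : POVM Circle Qubit where
  toFun := Pop μ g
  isPositive B hB := by
    rw [isPositive_iff_complex]
    intro x
    have key : ⟪x, Pop μ g B x⟫ = ((∫ z in B, g z *
        Complex.normSq (x 0 + (starRingEnd ℂ) (z : ℂ) * x 1) ∂μ : ℝ) : ℂ) := by
      rw [Pop_inner μ hg, ← integral_complex_ofReal]
      congr 1; ext z; rw [inner_Dz_self]; push_cast; rfl
    have key2 : ⟪Pop μ g B x, x⟫ = ((∫ z in B, g z *
        Complex.normSq (x 0 + (starRingEnd ℂ) (z : ℂ) * x 1) ∂μ : ℝ) : ℂ) := by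
      rw [← inner_conj_symm, key, Complex.conj_ofReal]
    rw [key2]
    refine ⟨by simp, ?_⟩
    simp only [RCLike.re_to_complex, Complex.ofReal_re]
    exact integral_nonneg fun z => mul_nonneg (h0 z) (Complex.normSq_nonneg _)
  normalized := by
    rw [Pop, setIntegral_univ, setIntegral_univ, setIntegral_univ, h1, h2, h3, one_smul]
    apply ContinuousLinearMap.ext; intro ψ
    refine ext_inner_left ℂ fun φ => ?_
    have h := inner_T 1 0 0 φ ψ
    rw [one_smul] at h
    rw [h, show (1 : Qubit →L[ℂ] Qubit) ψ = ψ from rfl, PiLp.inner_apply, Fin.sum_univ_two]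
    simp
    ring
  m_iUnion B hB hd φ ψ := by
    simp only [Pop_inner μ hg]
    refine hasSum_integral_iUnion hB hd (circ_integrable μ ?_).integrableOn
    exact (Complex.continuous_ofReal.comp hg).mul (continuous_inner_Dz φ ψ)

lemma circ_pow_integral (μ : Measure Circle) [μ.IsHaarMeasure] (n : ℕ) (w : Circle)
    (hw : (w : ℂ) ^ n ≠ 1) : ∫ z : Circle, (z : ℂ) ^ n ∂μ = 0 := by
  have h := integral_mul_left_eq_self (μ := μ) (fun z : Circle => (z : ℂ) ^ n) w
  simp only [Circle.coe_mul, mul_pow] at h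
  rw [integral_const_mul] at h
  have : ((w : ℂ) ^ n - 1) * ∫ z : Circle, (z : ℂ) ^ n ∂μ = 0 := by linear_combination h
  exact (mul_eq_zero.1 this).resolve_left (sub_ne_zero.2 hw)

lemma circ_I (μ : Measure Circle) [μ.IsHaarMeasure] :
    (∫ z : Circle, (z : ℂ) ∂μ = 0) ∧ (∫ z : Circle, (z : ℂ) ^ 2 ∂μ = 0) ∧
    (∫ z : Circle, (z : ℂ) ^ 3 ∂μ = 0) := by
  have e : ((Circle.exp Real.pi : Circle) : ℂ) = -1 := by
    rw [Circle.coe_exp]; exact Complex.exp_pi_mul_I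
  refine ⟨?_, ?_, ?_⟩
  · simpa using circ_pow_integral μ 1 (Circle.exp Real.pi) (by rw [e]; norm_num)
  · refine circ_pow_integral μ 2 (Circle.exp (Real.pi / 2)) ?_
    rw [← Circle.coe_pow, ← Circle.exp_nsmul]
    have : (2 • (Real.pi / 2)) = Real.pi := by simp; ring
    rw [this, e]; norm_num
  · exact circ_pow_integral μ 3 (Circle.exp Real.pi) (by rw [e]; norm_num)

lemma circ_conj_integral (μ : Measure Circle) {f : Circle → ℂ}
    (h : ∫ z : Circle, f z ∂μ = 0) : ∫ z : Circle, (starRingEnd ℂ) (f z) ∂μ = 0 := by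
  rw [integral_conj, h, map_zero]

lemma adj_Uop (w : Circle) : adjoint (Uop w) =
    ketbra qzero qzero + (starRingEnd ℂ (w : ℂ)) • ketbra qone qone := by
  symm
  rw [eq_adjoint_iff]
  intro x y
  simp [Uop, ketbra, qzero, qone, inner_add_right, inner_add_left, inner_smul_right, inner_smul_left,
    EuclideanSpace.inner_single_left, EuclideanSpace.inner_single_right]
  ring

lemma conj_T (w : Circle) (T : Qubit →L[ℂ] Qubit) (φ ψ : Qubit) :
    ⟪φ, (Uop w ∘L T ∘L adjoint (Uop w)) ψ⟫ =
      ⟪adjoint (Uop w) φ, T (adjoint (Uop w) ψ)⟫ := by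
  rw [adjoint_inner_left]; rfl

lemma adjU_apply (w : Circle) (φ : Qubit) : (adjoint (Uop w) φ) 0 = φ 0 ∧
    (adjoint (Uop w) φ) 1 = starRingEnd ℂ (w : ℂ) * φ 1 := by
  rw [adj_Uop]
  simp [ketbra, qzero, qone, EuclideanSpace.inner_single_left]

lemma image_eq_pre (w : Circle) (B : Set Circle) :
    (fun z => w * z) '' B = (fun z => w⁻¹ * z) ⁻¹' B := by
  ext z; constructor
  · rintro ⟨y, hy, rfl⟩; simpa using hy
  · intro h; exact ⟨_, h, by simp⟩

lemma meas_image (w : Circle) (B : Set Circle) (hB : MeasurableSet B) :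
    MeasurableSet ((fun z => w * z) '' B) := by
  rw [image_eq_pre]
  exact (continuous_const_mul _).measurable hB

lemma setint_image (μ : Measure Circle) [μ.IsHaarMeasure] (w : Circle) (B : Set Circle)
    (hB : MeasurableSet B) (f : Circle → ℂ) :
    ∫ z in (fun z => w * z) '' B, f z ∂μ = ∫ z in B, f (w * z) ∂μ := by
  rw [← integral_indicator hB, ← integral_indicator (meas_image w B hB),
    ← integral_mul_left_eq_self _ w]
  congr 1; ext z
  by_cases h : z ∈ B
  · rw [indicator_of_mem h, indicator_of_mem (mem_image_of_mem _ h)]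
  · rw [indicator_of_notMem h, indicator_of_notMem]
    rw [image_eq_pre]; simpa using h

lemma Mop_inner (μ : Measure Circle) [IsProbabilityMeasure μ] 
    (B : Set Circle) (φ ψ : Qubit) :
    ⟪φ, Mop μ B ψ⟫ = ∫ z in B, ⟪φ, Dz z ψ⟫ ∂μ := by
  rw [← Pop_one, Pop_inner μ continuous_const]; simp

lemma Mop_cov (μ : Measure Circle) [μ.IsHaarMeasure] [IsProbabilityMeasure μ] 
    (w : Circle) (B : Set Circle) (hB : MeasurableSet B) :
    Uop w ∘L Mop μ B ∘L adjoint (Uop w) = Mop μ ((fun z => w * z) '' B) := by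
  apply ContinuousLinearMap.ext; intro ψ
  refine ext_inner_left ℂ fun φ => ?_
  have h : (starRingEnd ℂ) (w : ℂ) * w = 1 := by
    rw [← Complex.normSq_eq_conj_mul_self]; simp
  rw [conj_T, Mop_inner, Mop_inner, setint_image μ w B hB]
  congr 1; ext z
  rw [inner_Dz, inner_Dz, (adjU_apply w φ).1, (adjU_apply w φ).2, (adjU_apply w ψ).1,
    (adjU_apply w ψ).2]
  simp only [map_mul, Complex.conj_conj, Circle.coe_mul]
  linear_combination (starRingEnd ℂ (φ 1) * ψ 1) * h

lemma second_moment (μ : Measure Circle) [μ.IsHaarMeasure] [IsProbabilityMeasure μ]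
    (φ ψ : Qubit) : ∫ z : Circle, (z : ℂ) ^ 2 * ⟪φ, Dz z ψ⟫ ∂μ = 0 := by
  obtain ⟨i1, i2, i3⟩ := circ_I μ
  have h1 : Continuous fun z : Circle => (z : ℂ) := circ_cont
  have : ∀ z : Circle, (z : ℂ) ^ 2 * ⟪φ, Dz z ψ⟫ =
      (z : ℂ) ^ 2 * (starRingEnd ℂ (φ 0) * ψ 0 + starRingEnd ℂ (φ 1) * ψ 1)
       + (z : ℂ) * (starRingEnd ℂ (φ 0) * ψ 1) + (z : ℂ) ^ 3 * (starRingEnd ℂ (φ 1) * ψ 0) := by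
    intro z
    have h : (starRingEnd ℂ) (z : ℂ) * z = 1 := by
      rw [← Complex.normSq_eq_conj_mul_self]; simp
    rw [inner_Dz]
    linear_combination (z : ℂ) * (starRingEnd ℂ (φ 0) * ψ 1) * h
  simp only [this]
  rw [integral_add, integral_add, integral_mul_const, integral_mul_const, integral_mul_const,
    i1, i2, i3]
  · simp
  all_goals exact circ_integrable μ (by fun_prop)

lemma not_ext (μ : Measure Circle) [μ.IsHaarMeasure] [IsProbabilityMeasure μ] :
    ∃ M₁ M₂ : POVM Circle Qubit, (∀ B, Mop μ B = ((1/2 : ℝ) : ℂ) • M₁.toFun B +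
      ((1 - 1/2 : ℝ) : ℂ) • M₂.toFun B) ∧ ∃ B, MeasurableSet B ∧ M₁.toFun B ≠ Mop μ B := by
  obtain ⟨i1, i2, i3⟩ := circ_I μ
  have j1 := circ_conj_integral μ i1
  have j2 := circ_conj_integral μ i2
  have j3 := circ_conj_integral μ i3
  have c1 : Continuous fun z : Circle => (z : ℂ) := circ_cont
  have c2 : Continuous fun z : Circle => (starRingEnd ℂ) (z : ℂ) :=
    Complex.continuous_conj.comp c1
  have cf : Continuous fun z : Circle => ((z : ℂ) ^ 2).re :=
    Complex.continuous_re.comp (c1.pow 2)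
  have eq1 (s : ℝ) (z : Circle) : ((1 + s * ((z : ℂ) ^ 2).re : ℝ) : ℂ) =
      1 + (s / 2) * ((z : ℂ) ^ 2 + starRingEnd ℂ ((z : ℂ) ^ 2)) := by
    rw [Complex.add_conj]; push_cast; ring
  have e (z : Circle) : (starRingEnd ℂ) (z : ℂ) * z = 1 := by
    rw [← Complex.normSq_eq_conj_mul_self]; simp
  have mk (s : ℝ) : (∫ z : Circle, ((1 + s * ((z : ℂ) ^ 2).re : ℝ) : ℂ) ∂μ = 1) ∧
     (∫ z : Circle, ((1 + s * ((z : ℂ) ^ 2).re : ℝ) : ℂ) * z ∂μ = 0) := by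
    constructor
    · simp only [eq1]
      rw [integral_add, integral_const_mul, integral_add, i2, j2]
      · simp
      all_goals exact circ_integrable μ (by fun_prop)
    · have : ∀ z : Circle, ((1 + s * ((z : ℂ) ^ 2).re : ℝ) : ℂ) * z =
          z + (s / 2) * ((z : ℂ) ^ 3 + starRingEnd ℂ (z : ℂ)) := by
        intro z; rw [eq1, map_pow]
        linear_combination (s / 2) * starRingEnd ℂ (z : ℂ) * e z
      simp only [this]
      rw [integral_add, integral_const_mul, integral_add, i1, i3, j1]
      · simp
      all_goals exact circ_integrable μ (by fun_prop)
  have mk2 (s : ℝ) :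
     (∫ z : Circle, ((1 + s * ((z : ℂ) ^ 2).re : ℝ) : ℂ) * (starRingEnd ℂ) (z : ℂ) ∂μ = 0) := by
    have := circ_conj_integral μ (mk s).2
    simpa only [map_mul, Complex.conj_ofReal] using this
  have bd (z : Circle) : |((z : ℂ) ^ 2).re| ≤ 1 := by
    refine (Complex.abs_re_le_norm _).trans ?_
    rw [norm_pow, Circle.norm_coe]; simp
  have hc (s : ℝ) : Continuous fun z : Circle => 1 + s * ((z : ℂ) ^ 2).re := by fun_prop
  refine ⟨PopPOVM μ (hc 1) (fun z => by have := (abs_le.1 (bd z)).1; linarith) (mk 1).1 (mk2 1)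
    (mk 1).2, PopPOVM μ (hc (-1)) (fun z => by have := (abs_le.1 (bd z)).2; linarith)
    (mk (-1)).1 (mk2 (-1)) (mk (-1)).2, ?_, ?_⟩
  · intro B
    apply ContinuousLinearMap.ext; intro ψ
    refine ext_inner_left ℂ fun φ => ?_
    simp only [PopPOVM, add_apply, smul_apply, inner_add_right, inner_smul_right]
    rw [Mop_inner, Pop_inner μ (hc 1), Pop_inner μ (hc (-1)), ← integral_const_mul,
      ← integral_const_mul, ← integral_add]
    · congr 1; ext z; push_cast; ring
    all_goals
      refine (circ_integrable μ (continuous_const.mul (Continuous.mul ?_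
        (continuous_inner_Dz φ ψ)))).integrableOn
      exact Complex.continuous_ofReal.comp (hc _)
  · by_contra hcon
    push Not at hcon
    have hz : (fun z : Circle => ((z : ℂ) ^ 2).re) =ᵐ[μ] 0 := by
      refine Integrable.ae_eq_zero_of_forall_setIntegral_eq_zero (circ_integrable μ cf) ?_
      intro B hB _
      have h := congrArg (fun T : Qubit →L[ℂ] Qubit => ⟪qzero, T qzero⟫) (hcon B hB)
      have hD (z : Circle) : ⟪qzero, Dz z qzero⟫ = 1 := by
        rw [inner_Dz]; simp [qzero]
      simp only [PopPOVM] at h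
      rw [Pop_inner μ (hc 1), Mop_inner] at h
      simp only [hD, mul_one] at h
      rw [integral_complex_ofReal, integral_add, integral_const_mul] at h
      · simpa using h
      · exact (circ_integrable μ continuous_const).integrableOn
      · exact (circ_integrable μ (by fun_prop)).integrableOn
    have h0 := (cf.ae_eq_iff_eq μ continuous_zero).1 hz
    have := congrFun h0 1
    simp at this

lemma qsplit (φ : Qubit) : φ = φ 0 • qzero + φ 1 • qone := by
  ext i; fin_cases i <;> simp [qzero, qone]

lemma inner_expand (T : Qubit →L[ℂ] Qubit) (φ ψ : Qubit) :
    ⟪φ, T ψ⟫ = starRingEnd ℂ (φ 0) * ψ 0 * ⟪qzero, T qzero⟫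
      + starRingEnd ℂ (φ 0) * ψ 1 * ⟪qzero, T qone⟫
      + starRingEnd ℂ (φ 1) * ψ 0 * ⟪qone, T qzero⟫
      + starRingEnd ℂ (φ 1) * ψ 1 * ⟪qone, T qone⟫ := by
  conv_lhs => rw [qsplit φ, qsplit ψ]
  simp only [map_add, map_smul, inner_add_left, inner_add_right, inner_smul_left, inner_smul_right]
  ring

lemma off_conj {T : Qubit →L[ℂ] Qubit} (hT : T.IsPositive) :
    ⟪qone, T qzero⟫ = starRingEnd ℂ ⟪qzero, T qone⟫ := by
  rw [inner_conj_symm]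
  exact (hT.isSymmetric qone qzero).symm

lemma scal_bound {T : Qubit →L[ℂ] Qubit} (hT : T.IsPositive) {m : ℝ}
    (h0 : ⟪qzero, T qzero⟫ = m) (h1 : ⟪qone, T qone⟫ = m) : ‖⟪qzero, T qone⟫‖ ≤ m := by
  set ν : ℂ := ⟪qzero, T qone⟫ with hν
  have hp := hT.re_inner_nonneg_right !₂[(‖ν‖ : ℂ), - starRingEnd ℂ ν]
  rw [inner_expand, h0, h1, off_conj hT, ← hν] at hp
  have e : starRingEnd ℂ ν * ν = ((‖ν‖ ^ 2 : ℝ) : ℂ) := by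
    rw [← Complex.normSq_eq_conj_mul_self, Complex.normSq_eq_norm_sq]
  have e2 : (starRingEnd ℂ) ((!₂[(‖ν‖ : ℂ), - starRingEnd ℂ ν] : Qubit) 0) * (!₂[(‖ν‖ : ℂ), - starRingEnd ℂ ν] : Qubit) 0 * (m : ℂ)
      + (starRingEnd ℂ) ((!₂[(‖ν‖ : ℂ), - starRingEnd ℂ ν] : Qubit) 0) * (!₂[(‖ν‖ : ℂ), - starRingEnd ℂ ν] : Qubit) 1 * ν
      + (starRingEnd ℂ) ((!₂[(‖ν‖ : ℂ), - starRingEnd ℂ ν] : Qubit) 1) * (!₂[(‖ν‖ : ℂ), - starRingEnd ℂ ν] : Qubit) 0 * starRingEnd ℂ ν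
      + (starRingEnd ℂ) ((!₂[(‖ν‖ : ℂ), - starRingEnd ℂ ν] : Qubit) 1) * (!₂[(‖ν‖ : ℂ), - starRingEnd ℂ ν] : Qubit) 1 * (m : ℂ)
      = ((2 * ‖ν‖ ^ 2 * (m - ‖ν‖) : ℝ) : ℂ) := by
    simp
    push_cast at e
    linear_combination ((m : ℂ) - 2 * ‖ν‖) * e
  rw [e2] at hp
  simp only [RCLike.re_to_complex, Complex.ofReal_re] at hp
  have hm : 0 ≤ m := by
    have := hT.re_inner_nonneg_right qzero
    rw [h0] at this; simpa using this
  by_contra hlt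
  push Not at hlt
  have : 0 < ‖ν‖ := by linarith
  have : 0 < 2 * ‖ν‖ ^ 2 := by positivity
  nlinarith

lemma scal_close {T : Qubit →L[ℂ] Qubit} (hT : T.IsPositive) {m : ℝ}
    (h0 : ⟪qzero, T qzero⟫ = m) (h1 : ⟪qone, T qone⟫ = m) (z : Circle) {c δ : ℝ} (hc : 0 < c)
    (hc1 : c ≤ 1) (hδ : 0 ≤ δ)
    (h : c * (⟪(!₂[1, -(z : ℂ)] : Qubit), T !₂[1, -(z : ℂ)]⟫).re ≤ (δ * c) ^ 2 * m) :
    ‖(z : ℂ) * ⟪qzero, T qone⟫ - m‖ ≤ δ * m := by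
  have hb := scal_bound hT h0 h1
  have hm : 0 ≤ m := (norm_nonneg _).trans hb
  have hbz : ‖(z : ℂ) * ⟪qzero, T qone⟫‖ ≤ m := by
    rw [norm_mul, Circle.norm_coe, one_mul]; exact hb
  have ez : (starRingEnd ℂ) (z : ℂ) * z = 1 := by
    rw [← Complex.normSq_eq_conj_mul_self]; simp
  have e : ⟪(!₂[1, -(z : ℂ)] : Qubit), T !₂[1, -(z : ℂ)]⟫ =
      2 * (m : ℂ) - ((z : ℂ) * ⟪qzero, T qone⟫ + starRingEnd ℂ ((z : ℂ) * ⟪qzero, T qone⟫)) := by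
    rw [inner_expand, h0, h1, off_conj hT]
    simp
    linear_combination (m : ℂ) * ez
  rw [e] at h
  set x : ℂ := (z : ℂ) * ⟪qzero, T qone⟫
  rw [Complex.add_conj] at h
  simp at h
  have h' : 2 * m - 2 * x.re ≤ δ ^ 2 * m := by
    have h3 : 2 * m - 2 * x.re ≤ δ ^ 2 * c * m := by
      refine le_of_mul_le_mul_left ?_ hc
      linarith
    have : δ ^ 2 * c * m ≤ δ ^ 2 * 1 * m := by gcongr
    linarith
  have hx : Complex.normSq (x - m) = Complex.normSq x + m ^ 2 - 2 * m * x.re := by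
    simp [Complex.normSq_apply]; ring
  refine abs_le_of_sq_le_sq' ?_ (by positivity) |>.2
  rw [← Complex.normSq_eq_norm_sq, hx, Complex.normSq_eq_norm_sq]
  have : ‖x‖ ^ 2 ≤ m ^ 2 := by gcongr
  nlinarith

lemma Mop_small (μ : Measure Circle) [IsProbabilityMeasure μ] (B : Set Circle)
    (hB : MeasurableSet B) (z : Circle) (ε : ℝ) (h : ∀ w ∈ B, ‖(w : ℂ) - z‖ ≤ ε) :
    (⟪(!₂[1, -(z : ℂ)] : Qubit), Mop μ B !₂[1, -(z : ℂ)]⟫).re ≤ ε ^ 2 * (μ B).toReal := by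
  have key : ∀ w : Circle, ⟪(!₂[1, -(z : ℂ)] : Qubit), Dz w !₂[1, -(z : ℂ)]⟫ =
      ((‖(w : ℂ) - z‖ ^ 2 : ℝ) : ℂ) := by
    intro w
    have ew : (starRingEnd ℂ) (w : ℂ) * w = 1 := by
      rw [← Complex.normSq_eq_conj_mul_self]; simp
    rw [inner_Dz_self, Complex.normSq_eq_norm_sq]
    have : (!₂[1, -(z : ℂ)] : Qubit) 0 + (starRingEnd ℂ) (w : ℂ) * (!₂[1, -(z : ℂ)] : Qubit) 1
        = (starRingEnd ℂ) (w : ℂ) * (w - z) := by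
      simp
      linear_combination - ew
    rw [this, norm_mul, RCLike.norm_conj, Circle.norm_coe, one_mul]
  rw [Mop_inner]
  simp only [key]
  rw [integral_complex_ofReal, Complex.ofReal_re]
  have : ∫ w in B, ε ^ 2 ∂μ = ε ^ 2 * (μ B).toReal := by
    simp [Measure.real]; ring
  rw [← this]
  have c1 := circ_cont
  refine setIntegral_mono_on (circ_integrable μ (by fun_prop)).integrableOn
    (circ_integrable μ (by fun_prop)).integrableOn hB fun w hw => ?_
  have := h w hw
  gcongr

lemma conj_small (μ : Measure Circle) [IsProbabilityMeasure μ] (B : Set Circle)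
    (z : Circle) (ε : ℝ) (hB : MeasurableSet B) (h : ∀ w ∈ B, ‖(w : ℂ) - z‖ ≤ ε) :
    ‖(z : ℂ) * (∫ w in B, (starRingEnd ℂ) (w : ℂ) ∂μ) - (μ B).toReal‖ ≤ ε * (μ B).toReal := by
  have c2 : Continuous fun z : Circle => (starRingEnd ℂ) (z : ℂ) :=
    Complex.continuous_conj.comp circ_cont
  have e : (z : ℂ) * (∫ w in B, (starRingEnd ℂ) (w : ℂ) ∂μ) - (μ B).toReal =
      ∫ w in B, ((z : ℂ) * (starRingEnd ℂ) (w : ℂ) - 1) ∂μ := by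
    rw [integral_sub, integral_const_mul]
    · simp [Measure.real]
    all_goals exact (circ_integrable μ (by fun_prop)).integrableOn
  rw [e]
  refine norm_setIntegral_le_of_norm_le_const (measure_lt_top μ B) fun w hw => ?_
  have ew : (starRingEnd ℂ) (w : ℂ) * w = 1 := by
    rw [← Complex.normSq_eq_conj_mul_self]; simp
  have : (z : ℂ) * (starRingEnd ℂ) (w : ℂ) - 1 = - ((starRingEnd ℂ) (w : ℂ) * (w - z)) := by
    linear_combination ew
  rw [this, norm_neg, norm_mul, RCLike.norm_conj, Circle.norm_coe, one_mul]
  exact h w hw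

lemma diag_eq (μ : Measure Circle) [μ.IsHaarMeasure] [IsProbabilityMeasure μ]
    (N : POVM Circle Qubit) (q : Qubit) (hq : ⟪q, q⟫ = 1)
    (hinv : ∀ (w : Circle) (B : Set Circle), MeasurableSet B →
      ⟪q, N.toFun ((fun z => w * z) '' B) q⟫ = ⟪q, N.toFun B q⟫)
    (B : Set Circle) (hB : MeasurableSet B) :
    ⟪q, N.toFun B q⟫ = (((μ B).toReal : ℝ) : ℂ) := by
  set f : Set Circle → ℝ := fun B => (⟪q, N.toFun B q⟫).re with hf
  have f0 : ∀ B, MeasurableSet B → 0 ≤ f B := fun B hB =>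
    (N.isPositive B hB).re_inner_nonneg_right q
  have fre : ∀ B, MeasurableSet B → ⟪q, N.toFun B q⟫ = (f B : ℂ) := fun B hB => by
    have := (N.isPositive B hB).inner_nonneg_right q
    exact Complex.ext rfl (by rw [← (Complex.nonneg_iff.1 this).2, Complex.ofReal_im])
  have fs : ∀ B : ℕ → Set Circle, (∀ k, MeasurableSet (B k)) →
      Pairwise (Function.onFun Disjoint B) → HasSum (fun k => f (B k)) (f (⋃ k, B k)) :=
    fun B hB hd => Complex.hasSum_re (N.m_iUnion B hB hd q q)
  have fe : f ∅ = 0 := by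
    have h := fs (fun _ => ∅) (fun _ => MeasurableSet.empty) (fun i j _ => by simp [Function.onFun])
    exact tendsto_nhds_unique (tendsto_const_nhds) h.summable.tendsto_atTop_zero
  let ν : Measure Circle := Measure.ofMeasurable (fun s _ => ENNReal.ofReal (f s)) (by simp [fe])
    (by
      intro B hB hd
      have h := fs B hB hd
      rw [← h.tsum_eq, ENNReal.ofReal_tsum_of_nonneg (fun n => f0 _ (hB n)) h.summable])
  have ν_apply : ∀ s, MeasurableSet s → ν s = ENNReal.ofReal (f s) := fun s hs =>
    Measure.ofMeasurable_apply s hs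
  have ν1 : IsProbabilityMeasure ν := ⟨by
    rw [ν_apply _ MeasurableSet.univ]; simp only [hf, N.normalized]; rw [show (1 : Qubit →L[ℂ] Qubit) q = q from rfl, hq]; simp⟩
  have νinv : ν.IsMulLeftInvariant := by
    rw [← forall_measure_preimage_mul_iff]
    intro g A hA
    have : (fun h => g * h) ⁻¹' A = (fun z => g⁻¹ * z) '' A := by
      rw [image_eq_pre, inv_inv]
    rw [this, ν_apply _ (meas_image _ _ hA), ν_apply _ hA]
    simp only [hf]
    rw [hinv _ _ hA]
  have hνμ : ν = μ := by
    have h := Measure.isMulInvariant_eq_smul_of_compactSpace ν μ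
    have h1 := congrArg (fun m : Measure Circle => m univ) h
    simp at h1
    rw [h]
    rw [← h1, one_smul]
  rw [fre B hB, ← hνμ, ν_apply B hB, ENNReal.toReal_ofReal (f0 B hB)]

lemma cov_diag (μ : Measure Circle) [μ.IsHaarMeasure] [IsProbabilityMeasure μ]
    (N : POVM Circle Qubit) (hN : QubitCovariant N)
    (B : Set Circle) (hB : MeasurableSet B) :
    ⟪qzero, N.toFun B qzero⟫ = (((μ B).toReal : ℝ) : ℂ) ∧
    ⟪qone, N.toFun B qone⟫ = (((μ B).toReal : ℝ) : ℂ) := by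
  constructor
  · refine diag_eq μ N qzero (by simp [qzero]) ?_ B hB
    intro w B hB
    rw [← hN w B hB, conj_T, inner_expand, (adjU_apply w _).1, (adjU_apply w _).2]
    simp [qzero]
  · refine diag_eq μ N qone (by simp [qone]) ?_ B hB
    intro w B hB
    have ew : (starRingEnd ℂ) (w : ℂ) * w = 1 := by
      rw [← Complex.normSq_eq_conj_mul_self]; simp
    rw [← hN w B hB, conj_T, inner_expand, (adjU_apply w _).1, (adjU_apply w _).2]
    have a : qone 0 = 0 := by simp [qone]
    have b : qone 1 = 1 := by simp [qone]
    rw [a, b]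
    simp only [map_mul, map_zero, map_one, Complex.conj_conj]
    linear_combination ⟪qone, N.toFun B qone⟫ * ew

lemma key_ext (μ : Measure Circle) [μ.IsHaarMeasure] [IsProbabilityMeasure μ]
    (N : POVM Circle Qubit) (hN : QubitCovariant N) {c : ℝ} (hc : 0 < c) (hc1 : c ≤ 1)
    (hle : ∀ B, MeasurableSet B → ∀ φ : Qubit,
      c * (⟪φ, N.toFun B φ⟫).re ≤ (⟪φ, Mop μ B φ⟫).re)
    (B : Set Circle) (hB : MeasurableSet B) : N.toFun B = Mop μ B := by
  have c2 : Continuous fun z : Circle => (starRingEnd ℂ) (z : ℂ) :=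
    Complex.continuous_conj.comp circ_cont
  have small : ∀ δ : ℝ, 0 < δ → ∀ z : Circle, ∀ B : Set Circle, MeasurableSet B →
      (∀ w ∈ B, ‖(w : ℂ) - z‖ ≤ δ * c) →
      ‖⟪qzero, N.toFun B qone⟫ - ∫ w in B, (starRingEnd ℂ) (w : ℂ) ∂μ‖
        ≤ 2 * δ * (μ B).toReal := by
    intro δ hδ z B hB hw
    obtain ⟨d0, d1⟩ := cov_diag μ N hN B hB
    have a := scal_close (N.isPositive B hB) d0 d1 z hc hc1 hδ.le
      ((hle B hB _).trans (Mop_small μ B hB z _ hw))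
    have b := conj_small μ B z _ hB hw
    have hm : 0 ≤ (μ B).toReal := ENNReal.toReal_nonneg
    have b' : δ * c * (μ B).toReal ≤ δ * 1 * (μ B).toReal := by gcongr
    have e : ‖⟪qzero, N.toFun B qone⟫ - ∫ w in B, (starRingEnd ℂ) (w : ℂ) ∂μ‖ =
       ‖((z : ℂ) * ⟪qzero, N.toFun B qone⟫ - (μ B).toReal) -
        ((z : ℂ) * (∫ w in B, (starRingEnd ℂ) (w : ℂ) ∂μ) - (μ B).toReal)‖ := by
      rw [sub_sub_sub_cancel_right, ← mul_sub, norm_mul, Circle.norm_coe, one_mul]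
    rw [e]
    refine (norm_sub_le _ _).trans ?_
    linarith
  have large : ∀ δ : ℝ, 0 < δ →
      ‖⟪qzero, N.toFun B qone⟫ - ∫ w in B, (starRingEnd ℂ) (w : ℂ) ∂μ‖ ≤ 2 * δ := by
    intro δ hδ
    let e : ℕ → Circle := TopologicalSpace.denseSeq Circle
    let A : ℕ → Set Circle := fun n => Metric.ball (e n) (δ * c)
    let P : ℕ → Set Circle := fun n => B ∩ disjointed A n
    have hAm : ∀ n, MeasurableSet (A n) := fun n => Metric.isOpen_ball.measurableSet
    have hPm : ∀ n, MeasurableSet (P n) := fun n =>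
      hB.inter (MeasurableSet.disjointed hAm n)
    have hPd : Pairwise (Function.onFun Disjoint P) := fun i j hij =>
      (disjoint_disjointed A hij).mono inter_subset_right inter_subset_right
    have hA : ⋃ n, A n = univ := by
      refine eq_univ_of_forall fun x => ?_
      obtain ⟨n, hn⟩ := (TopologicalSpace.denseRange_denseSeq Circle).exists_dist_lt x
        (mul_pos hδ hc)
      exact mem_iUnion.2 ⟨n, hn⟩
    have hPU : ⋃ n, P n = B := by
      rw [← inter_iUnion, iUnion_disjointed, hA, inter_univ]
    have s1 := N.m_iUnion P hPm hPd qzero qone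
    have s2 := hasSum_integral_iUnion (μ := μ) hPm hPd (circ_integrable μ c2).integrableOn
    have s3 := hasSum_integral_iUnion (μ := μ) (f := fun _ => (1 : ℝ)) hPm hPd
      (circ_integrable μ continuous_const).integrableOn
    rw [hPU] at s1 s2 s3
    have s4 := s1.sub s2
    simp only [setIntegral_const, Measure.real, smul_eq_mul, mul_one] at s3
    have s5 := s3.mul_left (2 * δ)
    have := tsum_of_norm_bounded s5 (fun n => small δ hδ (e n) (P n) (hPm n) (fun w hw => ?_))
    · rw [s4.tsum_eq] at this
      refine this.trans ?_
      have : (μ B).toReal ≤ 1 := by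
        have := prob_le_one (μ := μ) (s := B)
        exact ENNReal.toReal_le_of_le_ofReal zero_le_one (by simpa using this)
      nlinarith
    · have h1 : w ∈ A n := disjointed_subset A n hw.2
      have h2 : dist w (e n) < δ * c := h1
      have h3 : dist (w : ℂ) (e n : ℂ) < δ * c := h2
      rw [dist_eq_norm] at h3
      exact h3.le
  have h01 : ⟪qzero, N.toFun B qone⟫ = ∫ w in B, (starRingEnd ℂ) (w : ℂ) ∂μ := by
    rw [← sub_eq_zero, ← norm_le_zero_iff]
    refine le_of_forall_pos_le_add fun ε hε => ?_
    have := large (ε / 2) (by positivity)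
    linarith
  obtain ⟨d0, d1⟩ := cov_diag μ N hN B hB
  apply ContinuousLinearMap.ext; intro ψ
  refine ext_inner_left ℂ fun φ => ?_
  rw [inner_expand, d0, d1, off_conj (N.isPositive B hB), h01, Mop, inner_T, ← integral_conj]
  simp only [Complex.conj_conj]
  ring

theorem stmt12 (μ : Measure Circle) (hHaar : μ.IsHaarMeasure)
    (hProb : IsProbabilityMeasure μ) :
    -- (a) `B ↦ M(B)` extends to a POVM
    (∃ M : POVM Circle Qubit, ∀ B : Set Circle, MeasurableSet B → M.toFun B = Mop μ B) ∧
    -- (b) covariance: `U(w) M(B) U(w)* = M(w·B)`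
    (∀ w : Circle, ∀ B : Set Circle, MeasurableSet B →
      Uop w ∘L Mop μ B ∘L adjoint (Uop w) = Mop μ ((fun z => w * z) '' B)) ∧
    -- (c) the matrix elements of `M` have density `Dz` w.r.t. `μ`, and the second moment
    -- operator `∫ z² dM(z)` vanishes
    ((∀ B : Set Circle, MeasurableSet B → ∀ φ ψ : Qubit,
        ⟪φ, Mop μ B ψ⟫ = ∫ z in B, ⟪φ, Dz z ψ⟫ ∂μ) ∧
      (∀ φ ψ : Qubit, ∫ z, (z : ℂ) ^ 2 * ⟪φ, Dz z ψ⟫ ∂μ = 0)) ∧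
    -- (d) `M` is extreme among covariant POVMs but not among all POVMs
    (∀ M : POVM Circle Qubit, (∀ B : Set Circle, MeasurableSet B → M.toFun B = Mop μ B) →
      (QubitCovariant M ∧
        (∀ M₁ M₂ : POVM Circle Qubit, QubitCovariant M₁ → QubitCovariant M₂ →
          ∀ t : ℝ, 0 < t → t < 1 →
          (∀ B : Set Circle, MeasurableSet B →
            M.toFun B = (t : ℂ) • M₁.toFun B + ((1 - t : ℝ) : ℂ) • M₂.toFun B) →
          ∀ B : Set Circle, MeasurableSet B →
            M₁.toFun B = M.toFun B ∧ M₂.toFun B = M.toFun B)) ∧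
      ¬ (∀ M₁ M₂ : POVM Circle Qubit,
          ∀ t : ℝ, 0 < t → t < 1 →
          (∀ B : Set Circle, MeasurableSet B →
            M.toFun B = (t : ℂ) • M₁.toFun B + ((1 - t : ℝ) : ℂ) • M₂.toFun B) →
          ∀ B : Set Circle, MeasurableSet B →
            M₁.toFun B = M.toFun B ∧ M₂.toFun B = M.toFun B)) := by
  have := hHaar
  have := hProb
  obtain ⟨i1, i2, i3⟩ := circ_I μ
  refine ⟨⟨PopPOVM μ (g := fun _ => 1) continuous_const (fun _ => zero_le_one) (by simp)
    (by simpa using circ_conj_integral μ i1) (by simpa using i1), fun B _ => Pop_one μ B⟩,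
    Mop_cov μ, ⟨fun B _ φ ψ => Mop_inner μ B φ ψ, second_moment μ⟩, ?_⟩
  intro M hM
  refine ⟨⟨?_, ?_⟩, ?_⟩
  · intro w B hB
    rw [hM B hB, hM _ (meas_image w B hB)]
    exact Mop_cov μ w B hB
  · intro M₁ M₂ h₁ h₂ t ht0 ht1 h B hB
    have hre : ∀ B, MeasurableSet B → ∀ φ : Qubit, (⟪φ, Mop μ B φ⟫).re =
        t * (⟪φ, M₁.toFun B φ⟫).re + (1 - t) * (⟪φ, M₂.toFun B φ⟫).re := by
      intro B hB φ
      rw [← hM B hB, h B hB]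
      simp only [add_apply, smul_apply, inner_add_right, inner_smul_right]
      rw [Complex.add_re, Complex.re_ofReal_mul, Complex.re_ofReal_mul]
    have p₁ : ∀ B, MeasurableSet B → ∀ φ : Qubit, 0 ≤ (⟪φ, M₁.toFun B φ⟫).re :=
      fun B hB φ => (M₁.isPositive B hB).re_inner_nonneg_right φ
    have p₂ : ∀ B, MeasurableSet B → ∀ φ : Qubit, 0 ≤ (⟪φ, M₂.toFun B φ⟫).re :=
      fun B hB φ => (M₂.isPositive B hB).re_inner_nonneg_right φ
    rw [hM B hB]
    constructor
    · refine key_ext μ M₁ h₁ ht0 ht1.le (fun B hB φ => ?_) B hB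
      rw [hre B hB φ]
      have := mul_nonneg (sub_nonneg.2 ht1.le) (p₂ B hB φ)
      linarith
    · refine key_ext μ M₂ h₂ (c := 1 - t) (by linarith) (by linarith) (fun B hB φ => ?_) B hB
      rw [hre B hB φ]
      have := mul_nonneg ht0.le (p₁ B hB φ)
      linarith
  · intro hall
    obtain ⟨M₁, M₂, h, B, hB, hne⟩ := not_ext μ
    refine hne ?_
    rw [← hM B hB]
    exact (hall M₁ M₂ (1 / 2) (by norm_num) (by norm_num)
      (fun B hB => by rw [hM B hB]; exact h B) B hB).1

end
end

section
/- Let n ≥ 1 and let M be a POVM on (ℝⁿ, ℬ(ℝⁿ)) acting on L²(ℝ²ⁿ) that is covariant with respect to translations acting on position differences, i.e. U(u₁, u₂) M(B) U(u₁, u₂)* = M(B + u₂ − u₁) for all u₁, u₂ ∈ ℝⁿ and Borel B ⊆ ℝⁿ where (U(u₁, u₂)φ)(x, y) = φ(x − u₁, y − u₂), and invariant under all independent momentum boosts, i.e. V(p₁, p₂) M(B) V(p₁, p₂)* = M(B) for all p₁, p₂ ∈ ℝⁿ and Borel B where (V(p₁, p₂)φ)(x, y) = e^{i(p₁|x) +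 i(p₂|y)} φ(x, y). Then there exists a Borel probability measure ρ on ℝⁿ such that M = ρ ∗ E_κ, i.e. ⟨φ, M(B)ψ⟩ = ∫_{ℝⁿ} ⟨φ, E_κ(B − q)ψ⟩ dρ(q) for all φ, ψ ∈ L²(ℝ²ⁿ) and all Borel B ⊆ ℝⁿ. Conversely, ρ ∗ E_κ is such a covariant, boost-invariant POVM for every Borel probability measure ρ on ℝⁿ. -/
open MeasureTheory Set
open scoped ComplexConjugate Classical

local notation "⟪" x ", " y "⟫" => @inner ℂ _ _ x y

/-- `L²(ℝ²ⁿ)`, realized as the `L²`-space of the product `ℝⁿ × ℝⁿ` (first factor: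
coordinates of particle 1, second factor: coordinates of particle 2). -/
noncomputable abbrev L2R2n (n : ℕ) : Type :=
  Lp ℂ 2 (volume : Measure ((Fin n → ℝ) × (Fin n → ℝ)))

/-- Covariance with respect to translations acting on position differences:
`U(u₁,u₂) M(B) U(u₁,u₂)* = M(B + u₂ − u₁)`. -/
def DiffCovariant (n : ℕ)
    (U : (Fin n → ℝ) → (Fin n → ℝ) → (L2R2n n ≃ₗᵢ[ℂ] L2R2n n))
    (M : POVM (Fin n → ℝ) (L2R2n n)) : Prop :=
  ∀ u₁ u₂ : Fin n → ℝ, ∀ B : Set (Fin n → ℝ), MeasurableSet B →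
    ∀ φ ψ : L2R2n n,
      ⟪(U u₁ u₂ φ : L2R2n n), M.toFun ((fun x => x + u₂ - u₁) '' B) (U u₁ u₂ ψ)⟫
        = ⟪φ, M.toFun B ψ⟫

/-- Invariance under all independent momentum boosts of the two particles. -/
def IndepBoostInvariant (n : ℕ)
    (V : (Fin n → ℝ) → (Fin n → ℝ) → (L2R2n n ≃ₗᵢ[ℂ] L2R2n n))
    (M : POVM (Fin n → ℝ) (L2R2n n)) : Prop :=
  ∀ p₁ p₂ : Fin n → ℝ, ∀ B : Set (Fin n → ℝ), MeasurableSet B →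
    ∀ φ ψ : L2R2n n,
      ⟪(V p₁ p₂ φ : L2R2n n), M.toFun B (V p₁ p₂ ψ)⟫ = ⟪φ, M.toFun B ψ⟫


lemma aux_fourier_real {X : Type*} [NormedAddCommGroup X] [NormedSpace ℝ X] [CompleteSpace X]
    [SecondCountableTopology X] [MeasurableSpace X] [BorelSpace X] (vol : Measure X)
    (g : X → ℝ) (hg : Integrable g vol)
    (h : ∀ L : StrongDual ℝ X, ∫ z, Complex.exp (L z * Complex.I) * (g z : ℂ) ∂vol = 0) :
    g =ᵐ[vol] 0 := by
  have hp : ∫⁻ z, ENNReal.ofReal (g z) ∂vol ≠ ⊤ := hg.lintegral_lt_top.ne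
  have hm : ∫⁻ z, ENNReal.ofReal (-g z) ∂vol ≠ ⊤ := hg.neg.lintegral_lt_top.ne
  have i1 : IsFiniteMeasure (vol.withDensity fun z => ENNReal.ofReal (g z)) :=
    isFiniteMeasure_withDensity hp
  have i2 : IsFiniteMeasure (vol.withDensity fun z => ENNReal.ofReal (-g z)) :=
    isFiniteMeasure_withDensity hm
  have a1 : AEMeasurable (fun z => ENNReal.ofReal (g z)) vol := hg.1.aemeasurable.ennreal_ofReal
  have a2 : AEMeasurable (fun z => ENNReal.ofReal (-g z)) vol :=
    hg.neg.1.aemeasurable.ennreal_ofReal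
  have key : (vol.withDensity fun z => ENNReal.ofReal (g z))
      = vol.withDensity fun z => ENNReal.ofReal (-g z) := by
    apply Measure.ext_of_charFunDual
    funext L
    rw [charFunDual_apply, charFunDual_apply,
      integral_withDensity_eq_integral_toReal_smul₀ a1 (by simp),
      integral_withDensity_eq_integral_toReal_smul₀ a2 (by simp), ← sub_eq_zero,
      ← integral_sub]
    · rw [← h L]
      congr 1
      funext z
      rw [← sub_smul, ENNReal.toReal_ofReal', ENNReal.toReal_ofReal', Complex.real_smul, mul_comm]
      congr 2
      rcases le_total 0 (g z) with h | h <;> simp [h]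
    · refine Integrable.smul_bdd (𝕜 := ℝ) (C := 1) ?_ ?_ ?_
      · exact hg.real_toNNReal
      · fun_prop
      · exact Filter.Eventually.of_forall fun z => by
          simp [Complex.norm_exp_ofReal_mul_I]
    · refine Integrable.smul_bdd (𝕜 := ℝ) (C := 1) ?_ ?_ ?_
      · exact hg.neg.real_toNNReal
      · fun_prop
      · exact Filter.Eventually.of_forall fun z => by
          simp [Complex.norm_exp_ofReal_mul_I]
  rw [withDensity_eq_iff a1 a2 hp] at key
  filter_upwards [key] with z hz
  rcases le_total 0 (g z) with h | h
  · rw [ENNReal.ofReal_of_nonpos (p := -g z) (by linarith)] at hz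
    simp at hz ⊢; linarith
  · rw [ENNReal.ofReal_of_nonpos (p := g z) (by linarith)] at hz
    have := hz.symm
    simp at this ⊢; linarith

lemma aux_fourier {X : Type*} [NormedAddCommGroup X] [NormedSpace ℝ X] [CompleteSpace X]
    [SecondCountableTopology X] [MeasurableSpace X] [BorelSpace X] (vol : Measure X)
    (f : X → ℂ) (hf : Integrable f vol)
    (h : ∀ L : StrongDual ℝ X, ∫ z, Complex.exp (L z * Complex.I) * f z ∂vol = 0) :
    f =ᵐ[vol] 0 := by
  have hint : ∀ (L : StrongDual ℝ X) (g : X → ℂ), Integrable g vol →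
      Integrable (fun z => Complex.exp (L z * Complex.I) * g z) vol := by
    intro L g hg
    refine hg.bdd_mul (c := 1) (by fun_prop) (Filter.Eventually.of_forall fun z => by
          simp [Complex.norm_exp_ofReal_mul_I])
  have hfc : Integrable (fun z => conj (f z)) vol := by
    refine hf.mono (Complex.continuous_conj.comp_aestronglyMeasurable hf.1) (by simp)
  have hc : ∀ L : StrongDual ℝ X, ∫ z, Complex.exp (L z * Complex.I) * conj (f z) ∂vol = 0 := by
    intro L
    have := congrArg conj (h (-L))
    rw [← integral_conj] at this
    simpa [← Complex.exp_conj] using this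
  have hre : (fun z => (f z).re) =ᵐ[vol] 0 := by
    refine aux_fourier_real vol _ hf.re fun L => ?_
    have : (fun z => Complex.exp (L z * Complex.I) * ((f z).re : ℂ)) = fun z =>
      (1/2 : ℂ) * (Complex.exp (L z * Complex.I) * f z + Complex.exp (L z * Complex.I) * conj (f z)) := by
      funext z
      rw [Complex.re_eq_add_conj]; ring
    rw [this, integral_const_mul, integral_add (hint L _ hf) (hint L _ hfc), h, hc]; simp
  have him : (fun z => (f z).im) =ᵐ[vol] 0 := by
    refine aux_fourier_real vol _ hf.im fun L => ?_
    have : (fun z => Complex.exp (L z * Complex.I) * ((f z).im : ℂ)) = fun z =>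
      (1/(2 * Complex.I) : ℂ) * (Complex.exp (L z * Complex.I) * f z - Complex.exp (L z * Complex.I) * conj (f z)) := by
      funext z
      rw [Complex.im_eq_sub_conj]; ring
    rw [this, integral_const_mul, integral_sub (hint L _ hf) (hint L _ hfc), h, hc]; simp
  filter_upwards [hre, him] with z h1 h2
  exact Complex.ext h1 h2

lemma aux_comm (n : ℕ)
    (V : (Fin n → ℝ) → (Fin n → ℝ) → (L2R2n n ≃ₗᵢ[ℂ] L2R2n n))
    (hV : ∀ p₁ p₂ : Fin n → ℝ, ∀ φ : L2R2n n,
      (V p₁ p₂ φ : ((Fin n → ℝ) × (Fin n → ℝ)) → ℂ) =ᵐ[volume]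
        fun z => Complex.exp (Complex.I * ((∑ k, p₁ k * z.1 k) + ∑ k, p₂ k * z.2 k)) * φ z)
    (A : L2R2n n →L[ℂ] L2R2n n) (hA : A.IsPositive)
    (hi : ∀ p₁ p₂ : Fin n → ℝ, ∀ φ ψ : L2R2n n,
      ⟪(V p₁ p₂ φ : L2R2n n), A (V p₁ p₂ ψ)⟫ = ⟪φ, A ψ⟫) (φ ψ : L2R2n n) :
    (fun z => conj (φ z) * (A ψ) z) =ᵐ[volume] fun z => conj ((A φ) z) * ψ z := by
  have hc : ∀ p₁ p₂, A (V p₁ p₂ ψ) = V p₁ p₂ (A ψ) := by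
    intro p₁ p₂
    refine ext_inner_left ℂ fun v => ?_
    obtain ⟨w, rfl⟩ := (V p₁ p₂).surjective v
    rw [hi, LinearIsometryEquiv.inner_map_map]
  have hint : ∀ f g : L2R2n n, Integrable (fun z => conj (f z) * g z) := by
    intro f g
    refine (L2.integrable_inner (𝕜 := ℂ) f g).congr ?_
    filter_upwards with z
    simp [mul_comm]
  have hinn : ∀ f g : L2R2n n, ⟪f, g⟫ = ∫ z, conj (f z) * g z := by
    intro f g
    rw [L2.inner_def]
    congr 1
    funext z
    simp [mul_comm]
  have key := aux_fourier (volume : Measure ((Fin n → ℝ) × (Fin n → ℝ)))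
    (fun z => conj (φ z) * (A ψ) z - conj ((A φ) z) * ψ z) ((hint _ _).sub (hint _ _)) ?_
  · filter_upwards [key] with z hz
    exact sub_eq_zero.1 hz
  intro L
  set p₁ : Fin n → ℝ := fun k => L (Pi.single k 1, 0)
  set p₂ : Fin n → ℝ := fun k => L (0, Pi.single k 1)
  have hL : ∀ z, L z = (∑ k, p₁ k * z.1 k) + ∑ k, p₂ k * z.2 k := by
    intro z
    have h1 : z.1 = ∑ k, z.1 k • (Pi.single k (1:ℝ) : Fin n → ℝ) := by
      simpa using (pi_eq_sum_univ' z.1)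
    have h2 : z.2 = ∑ k, z.2 k • (Pi.single k (1:ℝ) : Fin n → ℝ) := by
      simpa using (pi_eq_sum_univ' z.2)
    have e1 : L.comp (ContinuousLinearMap.inl ℝ _ _) z.1 = ∑ k, p₁ k * z.1 k := by
      conv_lhs => rw [h1]
      rw [map_sum]
      refine Finset.sum_congr rfl fun k _ => ?_
      rw [map_smul, smul_eq_mul, mul_comm]; rfl
    have e2 : L.comp (ContinuousLinearMap.inr ℝ _ _) z.2 = ∑ k, p₂ k * z.2 k := by
      conv_lhs => rw [h2]
      rw [map_sum]
      refine Finset.sum_congr rfl fun k _ => ?_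
      rw [map_smul, smul_eq_mul, mul_comm]; rfl
    rw [← e1, ← e2]
    simp [← map_add]
  have hE : ∀ z : (Fin n → ℝ) × (Fin n → ℝ), Complex.exp (L z * Complex.I) =
      Complex.exp (Complex.I * ((∑ k, p₁ k * z.1 k) + ∑ k, p₂ k * z.2 k)) := by
    intro z
    rw [hL, mul_comm]; push_cast; rfl
  have hb : ∀ f g : L2R2n n, Integrable fun z => Complex.exp (L z * Complex.I) * (conj (f z) * g z) := by
    intro f g
    exact (hint f g).bdd_mul (c := 1) (by fun_prop) (Filter.Eventually.of_forall fun z => by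
          simp [Complex.norm_exp_ofReal_mul_I])
  simp_rw [mul_sub]
  rw [integral_sub (hb _ _) (hb _ _), sub_eq_zero]
  have f1 : ∫ z, Complex.exp (L z * Complex.I) * (conj (φ z) * (A ψ) z) = ⟪φ, V p₁ p₂ (A ψ)⟫ := by
    rw [hinn]
    apply integral_congr_ae
    filter_upwards [hV p₁ p₂ (A ψ)] with z hz
    rw [hz, hE]; ring
  have f2 : ∫ z, Complex.exp (L z * Complex.I) * (conj ((A φ) z) * ψ z) = ⟪A φ, V p₁ p₂ ψ⟫ := by
    rw [hinn]
    apply integral_congr_ae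
    filter_upwards [hV p₁ p₂ ψ] with z hz
    rw [hz, hE]; ring
  rw [f1, f2, ← hc]
  exact (hA.isSymmetric φ (V p₁ p₂ ψ)).symm

lemma aux_quad {X : Type*} [MeasurableSpace X] (vol : Measure X) (T : Lp ℂ 2 vol →L[ℂ] Lp ℂ 2 vol)
    (a : X → ℂ) (ha : ∀ᵐ z ∂vol, 0 ≤ (a z).re) (φ : Lp ℂ 2 vol)
    (hT : T φ =ᵐ[vol] fun z => a z * φ z) :
    ENNReal.ofReal (⟪φ, T φ⟫).re = ∫⁻ z, ENNReal.ofReal (a z).re * ‖φ z‖ₑ ^ 2 ∂vol := by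
  have hi := L2.integrable_inner (𝕜 := ℂ) φ (T φ)
  rw [L2.inner_def]
  have : (∫ z, ⟪φ z, (T φ) z⟫ ∂vol).re = ∫ z, (⟪φ z, (T φ) z⟫).re ∂vol :=
    (integral_re hi).symm
  have e : ∀ᵐ z ∂vol, (⟪φ z, (T φ) z⟫).re = (a z).re * ‖φ z‖ ^ 2 := by
    filter_upwards [hT] with z hz
    rw [hz, ← smul_eq_mul, inner_smul_right, inner_self_eq_norm_sq_to_K]
    simp [← Complex.ofReal_pow]
  have hi' : Integrable (fun z => (⟪φ z, (T φ) z⟫).re) vol := hi.re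
  rw [this, ofReal_integral_eq_lintegral_ofReal hi']
  · apply lintegral_congr_ae
    filter_upwards [e, ha] with z hz h
    show ENNReal.ofReal (⟪φ z, (T φ) z⟫).re = _
    rw [hz, ENNReal.ofReal_mul h, ENNReal.ofReal_pow (norm_nonneg _), ofReal_norm]
  · filter_upwards [e, ha] with z hz h
    show 0 ≤ (⟪φ z, (T φ) z⟫).re
    rw [hz]; positivity

lemma aux_density {X : Type*} [MeasurableSpace X] (vol : Measure X) [SigmaFinite vol]
    (A : Lp ℂ 2 vol →L[ℂ] Lp ℂ 2 vol) (hA : A.IsPositive)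
    (hc : ∀ φ ψ : Lp ℂ 2 vol, (fun z => conj (φ z) * (A ψ) z) =ᵐ[vol] fun z => conj ((A φ) z) * ψ z) :
    ∃ m : X → ENNReal, Measurable m ∧ ∀ φ : Lp ℂ 2 vol,
      ENNReal.ofReal (⟪φ, A φ⟫).re = ∫⁻ z, m z * ‖φ z‖ₑ ^ 2 ∂vol := by
  obtain ⟨g, gpos, gmeas, gint⟩ := exists_pos_lintegral_lt_of_sigmaFinite vol (ε := 1) one_ne_zero
  set h0 : X → ℂ := fun z => ((Real.sqrt (g z) : ℝ) : ℂ) with h0def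
  have h0m : Measurable h0 := by fun_prop
  have h0pos : ∀ z, (0 : ℝ) < Real.sqrt (g z) := fun z => Real.sqrt_pos.2 (gpos z)
  have h0mem : MemLp h0 2 vol := by
    refine ⟨h0m.aestronglyMeasurable, ?_⟩
    rw [eLpNorm_lt_top_iff_lintegral_rpow_enorm_lt_top (by simp) (by simp)]
    refine lt_of_le_of_lt (lintegral_mono fun z => ?_) (gint.trans ENNReal.one_lt_top)
    simp only [ENNReal.toReal_ofNat, ENNReal.rpow_ofNat]
    rw [← ofReal_norm, ← ENNReal.ofReal_pow (norm_nonneg _), h0def]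
    simp
  set h : Lp ℂ 2 vol := h0mem.toLp
  have hh : h =ᵐ[vol] h0 := h0mem.coeFn_toLp
  set a : X → ℂ := fun z => conj ((A h) z) / h0 z with adef
  have am : Measurable a := by
    have : Measurable (A h) := (Lp.stronglyMeasurable (A h)).measurable
    fun_prop
  have hmul : ∀ ψ : Lp ℂ 2 vol, A ψ =ᵐ[vol] fun z => a z * ψ z := by
    intro ψ
    filter_upwards [hc h ψ, hh] with z h1 h2
    have hne : h0 z ≠ 0 := by simpa [h0def] using (h0pos z).ne'
    rw [h2] at h1
    have : conj (h0 z) = h0 z := Complex.conj_ofReal _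
    rw [this] at h1
    rw [adef]; field_simp; rw [mul_comm, h1]
  have hinth : Integrable (fun z => (⟪h z, (A h) z⟫).re) vol := (L2.integrable_inner (𝕜 := ℂ) h (A h)).re
  have hnn : 0 ≤ᵐ[vol] fun z => (⟪h z, (A h) z⟫).re := by
    refine ae_nonneg_of_forall_setIntegral_nonneg hinth fun S hS _ => ?_
    set ψ : Lp ℂ 2 vol := (h0mem.indicator hS).toLp
    have hψ : ψ =ᵐ[vol] S.indicator h0 := (h0mem.indicator hS).coeFn_toLp
    have hp : 0 ≤ (⟪ψ, A ψ⟫).re := by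
      have := hA.re_inner_nonneg_right ψ
      exact this
    rw [L2.inner_def] at hp
    have e : (∫ z, ⟪ψ z, (A ψ) z⟫ ∂vol).re = ∫ z, (⟪ψ z, (A ψ) z⟫).re ∂vol :=
      (integral_re (L2.integrable_inner (𝕜 := ℂ) ψ (A ψ))).symm
    rw [e] at hp
    rw [← integral_indicator hS]
    refine hp.trans_eq (integral_congr_ae ?_)
    filter_upwards [hψ, hmul ψ, hmul h, hh] with z h1 h2 h3 h4
    rw [h2, h1]
    by_cases hz : z ∈ S
    · simp only [indicator_of_mem hz]
      rw [h3, h4]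
    · simp [indicator_of_notMem hz]
  have ha : ∀ᵐ z ∂vol, 0 ≤ (a z).re := by
    filter_upwards [hnn, hmul h, hh] with z h1 h2 h3
    have h1' : 0 ≤ (⟪h z, (A h) z⟫).re := h1
    rw [h2, h3, ← smul_eq_mul, inner_smul_right, inner_self_eq_norm_sq_to_K] at h1'
    have : 0 ≤ (a z).re * ‖h0 z‖ ^ 2 := by
      simpa [← Complex.ofReal_pow] using h1'
    refine nonneg_of_mul_nonneg_left this ?_
    have := h0pos z
    have : ‖h0 z‖ = Real.sqrt (g z) := by simp [h0def]
    rw [this]; positivity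
  exact ⟨fun z => ENNReal.ofReal (a z).re, by fun_prop, fun φ => aux_quad vol A a ha φ (hmul φ)⟩

lemma aux_conv_apply {E : Type*} [NormedAddCommGroup E] [NormedSpace ℝ E] [FiniteDimensional ℝ E]
    [MeasurableSpace E] [BorelSpace E] (μ ν : Measure E) [SFinite ν] (B : Set E)
    (hB : MeasurableSet B) : (μ ∗ ν) B = ∫⁻ x, ν {y | x + y ∈ B} ∂μ := by
  have : ProperSpace E := FiniteDimensional.proper ℝ E
  rw [Measure.conv, Measure.map_apply (by fun_prop) hB, Measure.prod_apply (by measurability)]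
  rfl

lemma aux_limit {E : Type*} [NormedAddCommGroup E] [NormedSpace ℝ E] [FiniteDimensional ℝ E]
    [MeasurableSpace E] [BorelSpace E] (ν μ : ℕ → Measure E)
    [∀ k, IsProbabilityMeasure (ν k)] [∀ k, IsProbabilityMeasure (μ k)]
    (hs : ∀ k : ℕ, ∀ᵐ x ∂(ν k), ‖x‖ ≤ 2 / ((k : ℝ) + 1))
    (hc : ∀ k, ν 0 ∗ μ k = ν k ∗ μ 0) :
    ∃ ρ : Measure E, IsProbabilityMeasure ρ ∧ ∀ (ν' μ' : Measure E) [IsFiniteMeasure ν']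
      [IsFiniteMeasure μ'], (∀ k, ν' ∗ μ k = ν k ∗ μ') → μ' = ν' ∗ ρ := by
  have : ProperSpace E := FiniteDimensional.proper ℝ E
  have h2 : ∀ k, ∀ᵐ x ∂(ν k), ‖x‖ ≤ 2 := by
    intro k
    filter_upwards [hs k] with x hx
    refine hx.trans ?_
    rw [div_le_iff₀ (by positivity)]
    nlinarith [(Nat.cast_nonneg k : (0:ℝ) ≤ k)]
  have hbound : ∀ k (R : ℝ), μ k (Metric.closedBall 0 (R + 4))ᶜ ≤ μ 0 (Metric.closedBall 0 R)ᶜ := by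
    intro k R
    have m2 : MeasurableSet (Metric.closedBall (0:E) (R+2))ᶜ :=
      Metric.isClosed_closedBall.measurableSet.compl
    calc μ k (Metric.closedBall 0 (R + 4))ᶜ = ∫⁻ x, μ k (Metric.closedBall 0 (R + 4))ᶜ ∂(ν 0) := by
          simp
      _ ≤ ∫⁻ x, μ k {y | x + y ∈ (Metric.closedBall (0:E) (R+2))ᶜ} ∂(ν 0) := by
          apply lintegral_mono_ae
          filter_upwards [h2 0] with x hx
          apply measure_mono
          intro y hy
          simp only [mem_compl_iff, Metric.mem_closedBall, dist_zero_right, not_le, mem_ofPred_eq] at hy ⊢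
          have := norm_sub_le (x + y) x
          simp only [add_sub_cancel_left] at this
          linarith
      _ = (ν 0 ∗ μ k) (Metric.closedBall (0:E) (R+2))ᶜ := (aux_conv_apply _ _ _ m2).symm
      _ = (ν k ∗ μ 0) (Metric.closedBall (0:E) (R+2))ᶜ := by rw [hc]
      _ = ∫⁻ x, μ 0 {y | x + y ∈ (Metric.closedBall (0:E) (R+2))ᶜ} ∂(ν k) := aux_conv_apply _ _ _ m2
      _ ≤ ∫⁻ x, μ 0 (Metric.closedBall 0 R)ᶜ ∂(ν k) := by
          apply lintegral_mono_ae
          filter_upwards [h2 k] with x hx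
          apply measure_mono
          intro y hy
          simp only [mem_compl_iff, Metric.mem_closedBall, dist_zero_right, not_le, mem_ofPred_eq] at hy ⊢
          have := norm_add_le x y
          linarith
      _ = _ := by simp
  let P : ℕ → ProbabilityMeasure E := fun k => ⟨μ k, inferInstance⟩
  have htight : IsTightMeasureSet {((μ : ProbabilityMeasure E) : Measure E) | μ ∈ range P} := by
    rw [isTightMeasureSet_iff_exists_isCompact_measure_compl_le]
    intro ε hε
    have h0 := tendsto_measure_compl_closedBall_of_isTightMeasureSet
      (isTightMeasureSet_singleton (μ := μ 0)) (0 : E)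
    simp only [mem_singleton_iff, iSup_iSup_eq_left] at h0
    obtain ⟨R, hR⟩ := (h0.eventually (ge_mem_nhds hε)).exists
    refine ⟨Metric.closedBall 0 (R + 4), isCompact_closedBall _ _, ?_⟩
    rintro _ ⟨_, ⟨k, rfl⟩, rfl⟩
    exact (hbound k R).trans hR
  have hcomp := isCompact_closure_of_isTightMeasureSet htight
  let F : Ultrafilter ℕ := Ultrafilter.of Filter.atTop
  have hF : (F : Filter ℕ) ≤ Filter.atTop := Ultrafilter.of_le _
  obtain ⟨ρ, -, hρ⟩ := hcomp.ultrafilter_le_nhds (F.map P) (by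
    simp only [Ultrafilter.coe_map, Filter.le_principal_iff, Filter.mem_map]
    exact Filter.univ_mem' fun k => subset_closure ⟨k, rfl⟩)
  have hρ' : Filter.Tendsto P F (nhds ρ) := hρ
  rw [ProbabilityMeasure.tendsto_iff_forall_integral_rclike_tendsto ℂ] at hρ'
  refine ⟨ρ, inferInstance, fun ν' μ' _ _ h => ?_⟩
  apply Measure.ext_of_charFunDual
  funext L
  rw [charFunDual_conv]
  have t1 : Filter.Tendsto (fun k => charFunDual (μ k) L) F (nhds (charFunDual (ρ : Measure E) L)) :=
    hρ' (BoundedContinuousFunction.probCharDual L)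
  have t2 : Filter.Tendsto (fun k => charFunDual (ν k) L) F (nhds 1) := by
    refine Filter.Tendsto.mono_left ?_ hF
    rw [tendsto_iff_norm_sub_tendsto_zero]
    refine squeeze_zero (g := fun k : ℕ => ‖L‖ * (2 / ((k : ℝ) + 1))) (fun k => norm_nonneg _) ?_ ?_
    · intro k
      have : charFunDual (ν k) L - 1 = ∫ x, (Complex.exp (L x * Complex.I) - 1) ∂(ν k) := by
        rw [integral_sub, charFunDual_apply]
        · simp
        · refine Integrable.of_bound (C := 1) (by fun_prop) (Filter.Eventually.of_forall fun z => by
            simp [Complex.norm_exp_ofReal_mul_I])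
        · exact integrable_const _
      rw [this]
      refine (norm_integral_le_of_norm_le_const (C := ‖L‖ * (2 / ((k : ℝ) + 1))) ?_).trans (by simp)
      filter_upwards [hs k] with x hx
      rw [mul_comm]
      refine (Real.norm_exp_I_mul_ofReal_sub_one_le).trans ?_
      exact (L.le_opNorm x).trans (by gcongr)
    · have := (tendsto_const_div_atTop_nhds_zero_nat (2:ℝ)).comp (Filter.tendsto_add_atTop_nat 1)
      have := this.const_mul ‖L‖
      simpa [Function.comp_def] using this
  have e1 : ∀ k, charFunDual ν' L * charFunDual (μ k) L = charFunDual (ν k) L * charFunDual μ' L := by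
    intro k
    rw [← charFunDual_conv, ← charFunDual_conv, h]
  have l1 := t1.const_mul (charFunDual ν' L)
  have l2 := t2.mul_const (charFunDual μ' L)
  simp_rw [e1] at l1
  rw [one_mul] at l2
  exact tendsto_nhds_unique l2 l1

lemma aux_mult {X : Type*} [MeasurableSpace X] (vol : Measure X) (m : X → ℝ) (hm : Measurable m)
    (hb : ∀ z, |m z| ≤ 1) : ∃ T : Lp ℂ 2 vol →L[ℂ] Lp ℂ 2 vol, ∀ φ : Lp ℂ 2 vol,
      T φ =ᵐ[vol] fun z => (m z : ℂ) * φ z := by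
  have hmem : MemLp (fun z => (m z : ℂ)) ⊤ vol :=
    memLp_top_of_bound (by fun_prop) 1 (Filter.Eventually.of_forall fun z => by simpa using hb z)
  refine ⟨(ContinuousLinearMap.mul ℂ ℂ).holderL vol ⊤ 2 2 hmem.toLp, fun φ => ?_⟩
  refine ((ContinuousLinearMap.mul ℂ ℂ).coeFn_holder (r := 2) hmem.toLp φ).trans ?_
  filter_upwards [hmem.coeFn_toLp] with z hz
  simp [hz]

lemma aux_m_meas (n : ℕ) (ρ : Measure (Fin n → ℝ)) [IsProbabilityMeasure ρ] (B : Set (Fin n → ℝ))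
    (hB : MeasurableSet B) :
    Measurable fun z : (Fin n → ℝ) × (Fin n → ℝ) => ρ {q | z.2 - z.1 + q ∈ B} := by
  have : MeasurableSet {p : ((Fin n → ℝ) × (Fin n → ℝ)) × (Fin n → ℝ) | p.1.2 - p.1.1 + p.2 ∈ B} := by
    apply measurableSet_preimage (f := fun p : ((Fin n → ℝ) × (Fin n → ℝ)) × (Fin n → ℝ) =>
      p.1.2 - p.1.1 + p.2) (by fun_prop) hB
  exact measurable_measure_prodMk_left this

lemma aux_slice (n : ℕ) (B : Set (Fin n → ℝ)) (hB : MeasurableSet B) (x : Fin n → ℝ) :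
    MeasurableSet {q | x + q ∈ B} :=
  measurableSet_preimage (f := fun q => x + q) (by fun_prop) hB

lemma aux_slice' (n : ℕ) (B : Set (Fin n → ℝ)) (hB : MeasurableSet B) (x : Fin n → ℝ) :
    MeasurableSet {q | q + x ∈ B} :=
  measurableSet_preimage (f := fun q => q + x) (by fun_prop) hB

lemma aux_N (n : ℕ) (ρ : Measure (Fin n → ℝ)) [IsProbabilityMeasure ρ] :
    ∃ N : POVM (Fin n → ℝ) (L2R2n n), ∀ B : Set (Fin n → ℝ), MeasurableSet B → ∀ φ : L2R2n n,
      N.toFun B φ =ᵐ[volume] fun z => ((ρ {q | z.2 - z.1 + q ∈ B}).toReal : ℂ) * φ z := by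
  have hex : ∀ B : Set (Fin n → ℝ), ∃ T : L2R2n n →L[ℂ] L2R2n n, MeasurableSet B →
      ∀ φ : L2R2n n, T φ =ᵐ[volume] fun z => ((ρ {q | z.2 - z.1 + q ∈ B}).toReal : ℂ) * φ z := by
    intro B
    by_cases hB : MeasurableSet B
    · obtain ⟨T, hT⟩ := aux_mult (volume : Measure ((Fin n → ℝ) × (Fin n → ℝ)))
        (fun z => (ρ {q | z.2 - z.1 + q ∈ B}).toReal) (aux_m_meas n ρ B hB).ennreal_toReal
        (fun z => by
          rw [abs_of_nonneg ENNReal.toReal_nonneg]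
          exact ENNReal.toReal_le_of_le_ofReal zero_le_one (by simpa using prob_le_one))
      exact ⟨T, fun _ => hT⟩
    · exact ⟨0, fun h => absurd h hB⟩
  choose T hT using hex
  have hinn : ∀ B, MeasurableSet B → ∀ φ ψ : L2R2n n, ⟪φ, T B ψ⟫ =
      ∫ z, ((ρ {q | z.2 - z.1 + q ∈ B}).toReal : ℂ) * ⟪φ z, ψ z⟫ := by
    intro B hB φ ψ
    rw [L2.inner_def]
    apply integral_congr_ae
    filter_upwards [hT B hB ψ] with z hz
    rw [hz, ← smul_eq_mul, inner_smul_right]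
  refine ⟨⟨T, ?_, ?_, ?_⟩, hT⟩
  · intro B hB
    rw [ContinuousLinearMap.isPositive_iff_complex]
    intro φ
    have e : ⟪T B φ, φ⟫ = ((∫ z, (ρ {q | z.2 - z.1 + q ∈ B}).toReal * ‖φ z‖ ^ 2 : ℝ) : ℂ) := by
      rw [← inner_conj_symm, hinn B hB, ← integral_conj, ← integral_complex_ofReal]
      congr 1
      funext z
      rw [inner_self_eq_norm_sq_to_K]
      simp
    rw [e]
    refine ⟨by simp, ?_⟩
    simp only [RCLike.re_eq_complex_re, Complex.ofReal_re]
    exact integral_nonneg fun z => by positivity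
  · ext1 φ
    apply Lp.ext
    filter_upwards [hT univ MeasurableSet.univ φ] with z hz
    rw [hz]; simp
  · intro B hB hd φ ψ
    have hU := MeasurableSet.iUnion hB
    have hsum : ∀ z : (Fin n → ℝ) × (Fin n → ℝ),
        HasSum (fun k => (ρ {q | z.2 - z.1 + q ∈ B k}).toReal)
          (ρ {q | z.2 - z.1 + q ∈ ⋃ k, B k}).toReal := by
      intro z
      have e : {q | z.2 - z.1 + q ∈ ⋃ k, B k} = ⋃ k, {q | z.2 - z.1 + q ∈ B k} := by
        ext q; simp
      have d : Pairwise (Function.onFun Disjoint fun k => {q | z.2 - z.1 + q ∈ B k}) := by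
        intro i j hij
        exact (hd hij).preimage (fun q => z.2 - z.1 + q)
      have hs := measure_iUnion (μ := ρ) d (fun k => aux_slice n (B k) (hB k) _)
      rw [e, hs]
      rw [ENNReal.tsum_toReal_eq fun k => measure_ne_top _ _]
      exact (ENNReal.summable_toReal (by rw [← hs]; exact measure_ne_top _ _)).hasSum
    show HasSum (fun k => ⟪φ, T (B k) ψ⟫) ⟪φ, T (⋃ k, B k) ψ⟫
    rw [hinn _ hU]
    simp_rw [fun k => hinn _ (hB k) φ ψ]
    have hi := L2.integrable_inner (𝕜 := ℂ) φ ψ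
    have him : ∀ C, MeasurableSet C → Integrable (fun z : (Fin n → ℝ) × (Fin n → ℝ) =>
        ((ρ {q | z.2 - z.1 + q ∈ C}).toReal : ℂ) * ⟪φ z, ψ z⟫) := by
      intro C hC
      refine hi.bdd_mul (c := 1) ?_ ?_
      · exact (Complex.measurable_ofReal.comp (aux_m_meas n ρ C hC).ennreal_toReal).aestronglyMeasurable
      · filter_upwards with z
        rw [Complex.norm_real, Real.norm_eq_abs, abs_of_nonneg ENNReal.toReal_nonneg]
        exact ENNReal.toReal_le_of_le_ofReal zero_le_one (by simpa using prob_le_one)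
    refine hasSum_integral_of_dominated_convergence
      (fun k z => (ρ {q | z.2 - z.1 + q ∈ B k}).toReal * ‖⟪φ z, ψ z⟫‖) ?_ ?_ ?_ ?_ ?_
    · exact fun k => (him _ (hB k)).1
    · intro k
      filter_upwards with z
      rw [norm_mul, Complex.norm_real, Real.norm_eq_abs, abs_of_nonneg ENNReal.toReal_nonneg]
    · filter_upwards with z
      exact ((hsum z).mul_right _).summable
    · refine (him _ hU).norm.congr ?_
      filter_upwards with z
      rw [((hsum z).mul_right _).tsum_eq, norm_mul, Complex.norm_real, Real.norm_eq_abs,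
        abs_of_nonneg ENNReal.toReal_nonneg]
    · filter_upwards with z
      refine HasSum.mul_right _ ?_
      exact Complex.hasSum_ofReal.2 (hsum z)

lemma aux_N_formula (n : ℕ) (ρ : Measure (Fin n → ℝ)) [IsProbabilityMeasure ρ]
    (E : POVM (Fin n → ℝ) (L2R2n n))
    (hE : ∀ B : Set (Fin n → ℝ), MeasurableSet B → ∀ φ : L2R2n n,
      (E.toFun B φ : ((Fin n → ℝ) × (Fin n → ℝ)) → ℂ) =ᵐ[volume]
        fun z => if z.2 - z.1 ∈ B then φ z else 0)
    (N : POVM (Fin n → ℝ) (L2R2n n))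
    (hN : ∀ B : Set (Fin n → ℝ), MeasurableSet B → ∀ φ : L2R2n n,
      N.toFun B φ =ᵐ[volume] fun z => ((ρ {q | z.2 - z.1 + q ∈ B}).toReal : ℂ) * φ z)
    (B : Set (Fin n → ℝ)) (hB : MeasurableSet B) (φ ψ : L2R2n n) :
    ⟪φ, N.toFun B ψ⟫ = ∫ q, ⟪φ, E.toFun {x | x + q ∈ B} ψ⟫ ∂ρ := by
  set S : Set ((Fin n → ℝ) × ((Fin n → ℝ) × (Fin n → ℝ))) := {p | p.2.2 - p.2.1 + p.1 ∈ B}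
  have hS : MeasurableSet S := measurableSet_preimage
    (f := fun p : (Fin n → ℝ) × ((Fin n → ℝ) × (Fin n → ℝ)) => p.2.2 - p.2.1 + p.1) (by fun_prop) hB
  set c : (Fin n → ℝ) × (Fin n → ℝ) → ℂ := fun z => ⟪φ z, ψ z⟫
  have hc : Integrable c := L2.integrable_inner (𝕜 := ℂ) φ ψ
  have h1 : ∀ q, ⟪φ, E.toFun {x | x + q ∈ B} ψ⟫ = ∫ z, S.indicator (fun p => c p.2) (q, z) := by
    intro q
    rw [L2.inner_def]
    apply integral_congr_ae
    filter_upwards [hE _ (aux_slice' n B hB q) ψ] with z hz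
    rw [hz]
    by_cases h : z.2 - z.1 + q ∈ B
    · have h' : (q, z) ∈ S := h
      rw [indicator_of_mem h', if_pos (by exact h)]
    · have h' : (q, z) ∉ S := h
      rw [indicator_of_notMem h', if_neg (by exact h)]
      simp
  simp_rw [h1]
  rw [integral_integral_swap (f := fun q z => S.indicator (fun p => c p.2) (q, z))
    ((hc.comp_snd ρ).indicator hS), L2.inner_def]
  apply integral_congr_ae
  filter_upwards [hN B hB ψ] with z hz
  rw [hz, ← smul_eq_mul, inner_smul_right]
  have : (fun q => S.indicator (fun p => c p.2) (q, z))
      = {q | z.2 - z.1 + q ∈ B}.indicator fun _ => c z := by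
    funext q; rfl
  rw [this, integral_indicator (aux_slice n B hB _)]
  simp [Measure.real, c]

lemma aux_inv (n : ℕ) : (volume : Measure ((Fin n → ℝ) × (Fin n → ℝ))).IsAddRightInvariant := by
  rw [Measure.volume_eq_prod]; infer_instance

lemma aux_part3 (n : ℕ)
    (U : (Fin n → ℝ) → (Fin n → ℝ) → (L2R2n n ≃ₗᵢ[ℂ] L2R2n n))
    (hU : ∀ u₁ u₂ : Fin n → ℝ, ∀ φ : L2R2n n,
      (U u₁ u₂ φ : ((Fin n → ℝ) × (Fin n → ℝ)) → ℂ) =ᵐ[volume]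
        fun z => φ (z.1 - u₁, z.2 - u₂))
    (V : (Fin n → ℝ) → (Fin n → ℝ) → (L2R2n n ≃ₗᵢ[ℂ] L2R2n n))
    (hV : ∀ p₁ p₂ : Fin n → ℝ, ∀ φ : L2R2n n,
      (V p₁ p₂ φ : ((Fin n → ℝ) × (Fin n → ℝ)) → ℂ) =ᵐ[volume]
        fun z => Complex.exp (Complex.I * ((∑ k, p₁ k * z.1 k) + ∑ k, p₂ k * z.2 k)) * φ z)
    (E : POVM (Fin n → ℝ) (L2R2n n))
    (hE : ∀ B : Set (Fin n → ℝ), MeasurableSet B → ∀ φ : L2R2n n,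
      (E.toFun B φ : ((Fin n → ℝ) × (Fin n → ℝ)) → ℂ) =ᵐ[volume]
        fun z => if z.2 - z.1 ∈ B then φ z else 0)
    (ρ : Measure (Fin n → ℝ)) (N : POVM (Fin n → ℝ) (L2R2n n))
    (hN : ∀ B : Set (Fin n → ℝ), MeasurableSet B → ∀ φ ψ : L2R2n n,
          ⟪φ, N.toFun B ψ⟫ = ∫ q, ⟪φ, E.toFun {x | x + q ∈ B} ψ⟫ ∂ρ) :
    DiffCovariant n U N ∧ IndepBoostInvariant n V N := by
  constructor
  · intro u₁ u₂ B hB φ ψ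
    have him : (fun x => x + u₂ - u₁) '' B = {x | x + (u₁ - u₂) ∈ B} := by
      ext x
      constructor
      · rintro ⟨y, hy, rfl⟩
        have : y + u₂ - u₁ + (u₁ - u₂) = y := by abel
        simpa [this] using hy
      · intro hx
        exact ⟨_, hx, by simp only; abel⟩
    have hB' : MeasurableSet ((fun x => x + u₂ - u₁) '' B) := by
      rw [him]; exact aux_slice' n B hB _
    rw [hN _ hB', hN _ hB]
    congr 1
    funext q
    rw [L2.inner_def, L2.inner_def]
    have e1 : ∫ z, ⟪(U u₁ u₂ φ) z, (E.toFun {x | x + q ∈ (fun x => x + u₂ - u₁) '' B} (U u₁ u₂ ψ)) z⟫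
        = ∫ z, (fun w : (Fin n → ℝ) × (Fin n → ℝ) =>
            ⟪φ w, if w.2 - w.1 + q ∈ B then ψ w else 0⟫) (z - (u₁, u₂)) := by
      apply integral_congr_ae
      filter_upwards [hU u₁ u₂ φ, hU u₁ u₂ ψ, hE _ (aux_slice' n _ hB' q) (U u₁ u₂ ψ)] with z h1 h2 h3
      rw [h3, h1, h2, him]
      have : z.2 - z.1 + q + (u₁ - u₂) = (z - (u₁, u₂)).2 - (z - (u₁, u₂)).1 + q := by
        simp only [Prod.fst_sub, Prod.snd_sub]; abel
      simp only [mem_ofPred_eq, this]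
      rfl
    have inv : (volume : Measure ((Fin n → ℝ) × (Fin n → ℝ))).IsAddRightInvariant :=
      aux_inv n
    rw [e1, integral_sub_right_eq_self (μ := (volume : Measure ((Fin n → ℝ) × (Fin n → ℝ))))
      (fun w : (Fin n → ℝ) × (Fin n → ℝ) => ⟪φ w, if w.2 - w.1 + q ∈ B then ψ w else 0⟫) (u₁, u₂)]
    apply integral_congr_ae
    filter_upwards [hE _ (aux_slice' n _ hB q) ψ] with z h3
    rw [h3]
  · intro p₁ p₂ B hB φ ψ
    rw [hN _ hB, hN _ hB]
    congr 1
    funext q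
    rw [L2.inner_def, L2.inner_def]
    apply integral_congr_ae
    filter_upwards [hV p₁ p₂ φ, hV p₁ p₂ ψ, hE _ (aux_slice' n _ hB q) ψ,
      hE _ (aux_slice' n _ hB q) (V p₁ p₂ ψ)] with z h1 h2 h3 h4
    rw [h4, h3, h2, h1]
    split_ifs
    · set t : ℝ := (∑ k, p₁ k * z.1 k) + ∑ k, p₂ k * z.2 k with ht
      have e : Complex.I * ((∑ k, p₁ k * z.1 k : ℝ) + (∑ k, p₂ k * z.2 k : ℝ)) = t * Complex.I := by
        rw [ht]; push_cast; ring
      have hn := Complex.norm_exp_ofReal_mul_I t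
      rw [e]
      generalize Complex.exp (t * Complex.I) = c at hn
      rw [← smul_eq_mul c, ← smul_eq_mul c, inner_smul_left, inner_smul_right, ← mul_assoc,
        ← Complex.normSq_eq_conj_mul_self, Complex.normSq_eq_norm_sq, hn]
      simp
    · simp

lemma aux_povm_measure {Ω : Type*} [MeasurableSpace Ω] {H : Type*} [NormedAddCommGroup H]
    [InnerProductSpace ℂ H] [CompleteSpace H] (M : POVM Ω H) (φ : H) :
    ∃ μ : Measure Ω, IsFiniteMeasure μ ∧ ∀ B, MeasurableSet B →
      μ B = ENNReal.ofReal (⟪φ, M.toFun B φ⟫).re := by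
  have hempty : ⟪φ, M.toFun ∅ φ⟫ = 0 := by
    have h := (M.m_iUnion (fun _ => ∅) (fun _ => MeasurableSet.empty)
      (fun i j _ => by simp [Function.onFun]) φ φ).summable
    exact (summable_const_iff _).1 h
  have hnn : ∀ B, MeasurableSet B → 0 ≤ (⟪φ, M.toFun B φ⟫).re := fun B hB =>
    (M.isPositive B hB).re_inner_nonneg_right φ
  refine ⟨Measure.ofMeasurable (fun B _ => ENNReal.ofReal (⟪φ, M.toFun B φ⟫).re) (by simp [hempty]) ?_, ?_, ?_⟩
  · intro B hB hd
    have h := Complex.hasSum_re (M.m_iUnion B hB hd φ φ)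
    rw [← h.tsum_eq, ENNReal.ofReal_tsum_of_nonneg (fun k => hnn _ (hB k)) h.summable]
  · constructor
    rw [Measure.ofMeasurable_apply _ MeasurableSet.univ]
    exact ENNReal.ofReal_lt_top
  · intro B hB
    rw [Measure.ofMeasurable_apply _ hB]

lemma aux_norm_sq {X : Type*} [MeasurableSpace X] (vol : Measure X) (φ : Lp ℂ 2 vol) :
    ∫⁻ z, ‖φ z‖ₑ ^ 2 ∂vol = ENNReal.ofReal (‖φ‖ ^ 2) := by
  have h := aux_quad vol 1 (fun _ => 1) (by simp) φ (by simp)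
  simp only [ContinuousLinearMap.one_apply, Complex.one_re, ENNReal.ofReal_one, one_mul] at h
  rw [← h, inner_self_eq_norm_sq_to_K]
  simp [← Complex.ofReal_pow]

noncomputable def auxNu (n : ℕ) (φ : L2R2n n) : Measure (Fin n → ℝ) :=
  ((volume : Measure ((Fin n → ℝ) × (Fin n → ℝ))).withDensity fun z => ‖φ z‖ₑ ^ 2).map
    fun z => z.2 - z.1

lemma aux_enorm_meas (n : ℕ) (φ : L2R2n n) : Measurable fun z => ‖φ z‖ₑ ^ 2 :=
  ((Lp.stronglyMeasurable φ).measurable.enorm).pow_const 2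

lemma auxNu_univ (n : ℕ) (φ : L2R2n n) : auxNu n φ univ = ENNReal.ofReal (‖φ‖ ^ 2) := by
  rw [auxNu, Measure.map_apply (by fun_prop) MeasurableSet.univ, preimage_univ,
    withDensity_apply _ MeasurableSet.univ, setLIntegral_univ, aux_norm_sq]

instance auxNu_finite (n : ℕ) (φ : L2R2n n) : IsFiniteMeasure (auxNu n φ) :=
  ⟨by rw [auxNu_univ]; exact ENNReal.ofReal_lt_top⟩

lemma auxNu_conv (n : ℕ) (φ : L2R2n n) (μ : Measure (Fin n → ℝ)) [IsFiniteMeasure μ]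
    (B : Set (Fin n → ℝ)) (hB : MeasurableSet B) :
    (auxNu n φ ∗ μ) B = ∫⁻ z, ‖φ z‖ₑ ^ 2 * μ {y | z.2 - z.1 + y ∈ B} := by
  have hm : Measurable fun x => μ {y | x + y ∈ B} := by
    have : MeasurableSet {p : (Fin n → ℝ) × (Fin n → ℝ) | p.1 + p.2 ∈ B} :=
      measurableSet_preimage (f := fun p : (Fin n → ℝ) × (Fin n → ℝ) => p.1 + p.2) (by fun_prop) hB
    exact measurable_measure_prodMk_left this
  rw [aux_conv_apply _ _ B hB, auxNu, lintegral_map hm (by fun_prop),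
    lintegral_withDensity_eq_lintegral_mul _ (aux_enorm_meas n φ) (by
      exact hm.comp (measurable_snd.sub measurable_fst))]
  rfl

lemma aux_conv_comm (n : ℕ)
    (U : (Fin n → ℝ) → (Fin n → ℝ) → (L2R2n n ≃ₗᵢ[ℂ] L2R2n n))
    (hU : ∀ u₁ u₂ : Fin n → ℝ, ∀ φ : L2R2n n,
      (U u₁ u₂ φ : ((Fin n → ℝ) × (Fin n → ℝ)) → ℂ) =ᵐ[volume]
        fun z => φ (z.1 - u₁, z.2 - u₂))
    (M : POVM (Fin n → ℝ) (L2R2n n)) (hM : DiffCovariant n U M)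
    (hd : ∀ B, MeasurableSet B → ∃ m : (Fin n → ℝ) × (Fin n → ℝ) → ENNReal, Measurable m ∧
      ∀ φ : L2R2n n, ENNReal.ofReal (⟪φ, M.toFun B φ⟫).re = ∫⁻ z, m z * ‖φ z‖ₑ ^ 2)
    (μ : L2R2n n → Measure (Fin n → ℝ)) [∀ φ, IsFiniteMeasure (μ φ)]
    (hμ : ∀ φ B, MeasurableSet B → μ φ B = ENNReal.ofReal (⟪φ, M.toFun B φ⟫).re)
    (φ ψ : L2R2n n) : auxNu n φ ∗ μ ψ = auxNu n ψ ∗ μ φ := by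
  have inv : (volume : Measure ((Fin n → ℝ) × (Fin n → ℝ))).IsAddRightInvariant :=
      aux_inv n
  ext B hB
  obtain ⟨m, hm, hmd⟩ := hd B hB
  have key : ∀ φ ψ : L2R2n n, (auxNu n φ ∗ μ ψ) B =
      ∫⁻ u, ∫⁻ w, ‖φ u‖ₑ ^ 2 * ‖ψ w‖ₑ ^ 2 * m (w + u) := by
    intro φ ψ
    rw [auxNu_conv n φ _ B hB]
    refine lintegral_congr fun u => ?_
    have himg : (fun x => x + u.2 - u.1) '' {y | u.2 - u.1 + y ∈ B} = B := by
      ext x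
      constructor
      · rintro ⟨y, hy, rfl⟩
        have : u.2 - u.1 + y = y + u.2 - u.1 := by abel
        simpa [this] using hy
      · intro hx
        refine ⟨x - u.2 + u.1, ?_, by simp only; abel⟩
        have : u.2 - u.1 + (x - u.2 + u.1) = x := by abel
        simpa [this] using hx
    have h1 := hM u.1 u.2 _ (aux_slice n B hB (u.2 - u.1)) ψ ψ
    rw [himg] at h1
    rw [hμ _ _ (aux_slice n B hB _), ← h1, hmd]
    have h2 : ∫⁻ z, m z * ‖(U u.1 u.2 ψ) z‖ₑ ^ 2
        = ∫⁻ z, (fun w => m (w + u) * ‖ψ w‖ₑ ^ 2) (z - u) := by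
      apply lintegral_congr_ae
      filter_upwards [hU u.1 u.2 ψ] with z hz
      rw [hz]
      simp only [sub_add_cancel]
      rfl
    have hme := aux_enorm_meas n ψ
    rw [h2, lintegral_sub_right_eq_self (μ := (volume : Measure ((Fin n → ℝ) × (Fin n → ℝ))))
      (fun w => m (w + u) * ‖ψ w‖ₑ ^ 2) u, ← lintegral_const_mul]
    · refine lintegral_congr fun w => ?_
      ring
    · exact (hm.comp (measurable_add_const u)).mul hme
  have m1 := aux_enorm_meas n φ
  have m2 := aux_enorm_meas n ψ
  rw [key, key, lintegral_lintegral_swap]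
  · refine lintegral_congr fun u => lintegral_congr fun w => ?_
    rw [add_comm u w]; ring
  · refine Measurable.aemeasurable ?_
    exact ((m1.comp measurable_fst).mul (m2.comp measurable_snd)).mul
      (hm.comp (measurable_snd.add measurable_fst))

lemma aux_bump (n k : ℕ) : ∃ φ : L2R2n n, ‖φ‖ = 1 ∧
    ∀ᵐ x ∂(auxNu n φ), ‖x‖ ≤ 2 / ((k : ℝ) + 1) := by
  set S : Set ((Fin n → ℝ) × (Fin n → ℝ)) := Metric.closedBall 0 (1 / ((k:ℝ) + 1))
  have hS : MeasurableSet S := Metric.isClosed_closedBall.measurableSet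
  have hfin : volume S ≠ ⊤ := (isCompact_closedBall _ _).measure_lt_top.ne
  have hpos : 0 < volume S := by
    refine lt_of_lt_of_le ?_ (measure_mono Metric.ball_subset_closedBall)
    refine Metric.measure_ball_pos _ _ (by positivity)
  set e : L2R2n n := indicatorConstLp 2 hS hfin (1 : ℂ)
  have he : e ≠ 0 := by
    intro h
    have h2 : ‖e‖ = 0 := by rw [h, norm_zero]
    rw [norm_indicatorConstLp (by simp) (by simp)] at h2
    have : 0 < (volume S).toReal := ENNReal.toReal_pos hpos.ne' hfin
    have := Real.rpow_pos_of_pos this (1 / (2:ENNReal).toReal)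
    simp only [norm_one, one_mul] at h2
    exact this.ne' h2
  refine ⟨((‖e‖⁻¹ : ℝ) : ℂ) • e, ?_, ?_⟩
  · rw [norm_smul, Complex.norm_real, norm_inv, norm_norm, inv_mul_cancel₀ (norm_ne_zero_iff.2 he)]
  · rw [auxNu, ae_map_iff (by fun_prop) (measurableSet_le (by fun_prop) (by fun_prop)),
      ae_withDensity_iff (aux_enorm_meas n _)]
    filter_upwards [Lp.coeFn_smul ((‖e‖⁻¹ : ℝ) : ℂ) e,
      (indicatorConstLp_coeFn (p := 2) (hs := hS) (hμs := hfin) (c := (1 : ℂ)))] with z h1 h2 h3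
    by_cases hz : z ∈ S
    · have hz' : ‖z‖ ≤ 1 / ((k:ℝ) + 1) := by simpa [S] using hz
      have a1 := (norm_fst_le z).trans hz'
      have a2 := (norm_snd_le z).trans hz'
      refine (norm_sub_le _ _).trans ?_
      have : (2:ℝ) / ((k:ℝ) + 1) = 1 / ((k:ℝ) + 1) + 1 / ((k:ℝ) + 1) := by ring
      linarith
    · exfalso
      apply h3
      have h2' : e z = 0 := by rw [h2, indicator_of_notMem hz]
      rw [h1]; simp [h2']

lemma aux_main (n : ℕ)
    (U : (Fin n → ℝ) → (Fin n → ℝ) → (L2R2n n ≃ₗᵢ[ℂ] L2R2n n))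
    (hU : ∀ u₁ u₂ : Fin n → ℝ, ∀ φ : L2R2n n,
      (U u₁ u₂ φ : ((Fin n → ℝ) × (Fin n → ℝ)) → ℂ) =ᵐ[volume]
        fun z => φ (z.1 - u₁, z.2 - u₂))
    (V : (Fin n → ℝ) → (Fin n → ℝ) → (L2R2n n ≃ₗᵢ[ℂ] L2R2n n))
    (hV : ∀ p₁ p₂ : Fin n → ℝ, ∀ φ : L2R2n n,
      (V p₁ p₂ φ : ((Fin n → ℝ) × (Fin n → ℝ)) → ℂ) =ᵐ[volume]
        fun z => Complex.exp (Complex.I * ((∑ k, p₁ k * z.1 k) + ∑ k, p₂ k * z.2 k)) * φ z)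
    (E : POVM (Fin n → ℝ) (L2R2n n))
    (hE : ∀ B : Set (Fin n → ℝ), MeasurableSet B → ∀ φ : L2R2n n,
      (E.toFun B φ : ((Fin n → ℝ) × (Fin n → ℝ)) → ℂ) =ᵐ[volume]
        fun z => if z.2 - z.1 ∈ B then φ z else 0)
    (M : POVM (Fin n → ℝ) (L2R2n n)) (hM : DiffCovariant n U M) (hI : IndepBoostInvariant n V M) :
    ∃ ρ : Measure (Fin n → ℝ), IsProbabilityMeasure ρ ∧
        ∀ B : Set (Fin n → ℝ), MeasurableSet B → ∀ φ ψ : L2R2n n,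
          ⟪φ, M.toFun B ψ⟫ = ∫ q, ⟪φ, E.toFun {x | x + q ∈ B} ψ⟫ ∂ρ := by
  have hd : ∀ B, MeasurableSet B → ∃ m : (Fin n → ℝ) × (Fin n → ℝ) → ENNReal, Measurable m ∧
      ∀ φ : L2R2n n, ENNReal.ofReal (⟪φ, M.toFun B φ⟫).re = ∫⁻ z, m z * ‖φ z‖ₑ ^ 2 := by
    intro B hB
    exact aux_density _ _ (M.isPositive B hB)
      (aux_comm n V hV _ (M.isPositive B hB) fun p₁ p₂ φ ψ => hI p₁ p₂ B hB φ ψ)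
  choose μ hfin hμ using fun φ => aux_povm_measure M φ
  have hcomm := aux_conv_comm n U hU M hM hd μ hμ
  choose e he1 he2 using aux_bump n
  have i1 : ∀ k, IsProbabilityMeasure (auxNu n (e k)) := fun k =>
    ⟨by rw [auxNu_univ, he1]; simp⟩
  have i2 : ∀ k, IsProbabilityMeasure (μ (e k)) := fun k =>
    ⟨by
      rw [hμ _ _ MeasurableSet.univ, M.normalized, ContinuousLinearMap.one_apply,
        inner_self_eq_norm_sq_to_K, he1]
      simp⟩
  obtain ⟨ρ, hρ, hlim⟩ := aux_limit (fun k => auxNu n (e k)) (fun k => μ (e k)) he2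
    (fun k => hcomm _ _)
  refine ⟨ρ, hρ, fun B hB φ ψ => ?_⟩
  obtain ⟨N, hN⟩ := aux_N n ρ
  rw [← aux_N_formula n ρ E hE N hN B hB]
  suffices h : M.toFun B = N.toFun B by rw [h]
  have hre : ∀ φ : L2R2n n, ⟪M.toFun B φ, φ⟫ = ⟪N.toFun B φ, φ⟫ := by
    intro φ
    have hconv := hlim (auxNu n φ) (μ φ) (fun k => hcomm _ _)
    have h1 := hμ φ B hB
    have h2 := aux_quad volume (N.toFun B)
      (fun z => ((ρ {q | z.2 - z.1 + q ∈ B}).toReal : ℂ)) (by simp) φ (hN B hB φ)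
    have h3 : ENNReal.ofReal (⟪φ, M.toFun B φ⟫).re = ENNReal.ofReal (⟪φ, N.toFun B φ⟫).re := by
      rw [← h1, h2, hconv, auxNu_conv n φ ρ B hB]
      refine lintegral_congr fun z => ?_
      rw [Complex.ofReal_re, ENNReal.ofReal_toReal (measure_ne_top _ _), mul_comm]
    have q1 : 0 ≤ (⟪φ, M.toFun B φ⟫).re := (M.isPositive B hB).re_inner_nonneg_right φ
    have q2 : 0 ≤ (⟪φ, N.toFun B φ⟫).re := (N.isPositive B hB).re_inner_nonneg_right φ
    rw [ENNReal.ofReal_eq_ofReal_iff q1 q2] at h3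
    have p1 := ((ContinuousLinearMap.isPositive_iff_complex _).1 (M.isPositive B hB) φ).1
    have p2 := ((ContinuousLinearMap.isPositive_iff_complex _).1 (N.isPositive B hB) φ).1
    rw [← p1, ← p2, ← inner_re_symm (𝕜 := ℂ) φ, ← inner_re_symm (𝕜 := ℂ) φ]
    exact congrArg Complex.ofReal h3
  have h4 := (ext_inner_map (M.toFun B : L2R2n n →ₗ[ℂ] L2R2n n) (N.toFun B : L2R2n n →ₗ[ℂ] L2R2n n)).1 hre
  exact ContinuousLinearMap.coe_injective h4

theorem stmt17 (n : ℕ) (hn : 1 ≤ n)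
    (U : (Fin n → ℝ) → (Fin n → ℝ) → (L2R2n n ≃ₗᵢ[ℂ] L2R2n n))
    (hU : ∀ u₁ u₂ : Fin n → ℝ, ∀ φ : L2R2n n,
      (U u₁ u₂ φ : ((Fin n → ℝ) × (Fin n → ℝ)) → ℂ) =ᵐ[volume]
        fun z => φ (z.1 - u₁, z.2 - u₂))
    (V : (Fin n → ℝ) → (Fin n → ℝ) → (L2R2n n ≃ₗᵢ[ℂ] L2R2n n))
    (hV : ∀ p₁ p₂ : Fin n → ℝ, ∀ φ : L2R2n n,
      (V p₁ p₂ φ : ((Fin n → ℝ) × (Fin n → ℝ)) → ℂ) =ᵐ[volume]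
        fun z => Complex.exp (Complex.I * ((∑ k, p₁ k * z.1 k) + ∑ k, p₂ k * z.2 k)) * φ z)
    -- the canonical position difference observable `E_κ`
    (E : POVM (Fin n → ℝ) (L2R2n n))
    (hE : ∀ B : Set (Fin n → ℝ), MeasurableSet B → ∀ φ : L2R2n n,
      (E.toFun B φ : ((Fin n → ℝ) × (Fin n → ℝ)) → ℂ) =ᵐ[volume]
        fun z => if z.2 - z.1 ∈ B then φ z else 0) :
    -- every covariant, boost-invariant POVM is a convolution `ρ ∗ E_κ` ...
    (∀ M : POVM (Fin n → ℝ) (L2R2n n), DiffCovariant n U M → IndepBoostInvariant n V M →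
      ∃ ρ : Measure (Fin n → ℝ), IsProbabilityMeasure ρ ∧
        ∀ B : Set (Fin n → ℝ), MeasurableSet B → ∀ φ ψ : L2R2n n,
          ⟪φ, M.toFun B ψ⟫ = ∫ q, ⟪φ, E.toFun {x | x + q ∈ B} ψ⟫ ∂ρ) ∧
    -- ... and conversely, for every probability measure `ρ` the convolution `ρ ∗ E_κ`
    -- exists as a POVM and is covariant and boost invariant
    (∀ ρ : Measure (Fin n → ℝ), IsProbabilityMeasure ρ →
      ∃ N : POVM (Fin n → ℝ) (L2R2n n),
        ∀ B : Set (Fin n → ℝ), MeasurableSet B → ∀ φ ψ : L2R2n n,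
          ⟪φ, N.toFun B ψ⟫ = ∫ q, ⟪φ, E.toFun {x | x + q ∈ B} ψ⟫ ∂ρ) ∧
    (∀ ρ : Measure (Fin n → ℝ), IsProbabilityMeasure ρ →
      ∀ N : POVM (Fin n → ℝ) (L2R2n n),
        (∀ B : Set (Fin n → ℝ), MeasurableSet B → ∀ φ ψ : L2R2n n,
          ⟪φ, N.toFun B ψ⟫ = ∫ q, ⟪φ, E.toFun {x | x + q ∈ B} ψ⟫ ∂ρ) →
        DiffCovariant n U N ∧ IndepBoostInvariant n V N) := by
  refine ⟨fun M hM hI => aux_main n U hU V hV E hE M hM hI, fun ρ hρ => ?_, fun ρ hρ N hN =>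
    aux_part3 n U hU V hV E hE ρ N hN⟩
  obtain ⟨N, hN⟩ := aux_N n ρ
  exact ⟨N, fun B hB φ ψ => aux_N_formula n ρ E hE N hN B hB φ ψ⟩
end

section
/- The linear span of the set of functions {t ↦ ∫_ℝ e^{itx} xⁿ e^{−|x|} dx : n ∈ ℕ}, i.e. the span of the Fourier transforms of the functions x ↦ xⁿ e^{−|x|} (n ∈ ℕ), is dense in L¹(ℝ; ℂ). -/
open MeasureTheory

/-- The Fourier transform of `x ↦ xⁿ e^{−|x|}`, i.e. `t ↦ ∫ e^{itx} xⁿ e^{−|x|} dx`. -/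
noncomputable def laguerreFourier (n : ℕ) (t : ℝ) : ℂ :=
  ∫ x : ℝ, Complex.exp (Complex.I * t * x) * (x : ℂ) ^ n * Complex.exp (-(|x| : ℝ))

open Complex in
lemma half_int (n : ℕ) {b : ℝ} (hb : 0 < b) (t : ℝ) :
    IntegrableOn (fun x : ℝ => (x : ℂ) ^ n * cexp (-((b : ℂ) - I * t) * x)) (Set.Ioi 0) := by
  have h := integrableOn_rpow_mul_exp_neg_mul_rpow (p := 1) (s := n) (b := b)
    (by have : (0:ℝ) ≤ n := Nat.cast_nonneg n
        linarith) one_pos hb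
  refine Integrable.mono' h ?_ ?_
  · exact (by fun_prop : Continuous fun x : ℝ =>
      (x : ℂ) ^ n * cexp (-((b : ℂ) - I * t) * x)).aestronglyMeasurable
  · refine (ae_restrict_iff' measurableSet_Ioi).2 (Filter.Eventually.of_forall fun x hx => ?_)
    have hx' : 0 < x := hx
    rw [norm_mul, norm_pow, Complex.norm_exp]
    simp [abs_of_pos hx']

open Complex Filter Topology in
lemma half_tend (n : ℕ) {b : ℝ} (hb : 0 < b) (t : ℝ) :
    Tendsto (fun x : ℝ => (x : ℂ) ^ n * cexp (-((b : ℂ) - I * t) * x)) atTop (𝓝 0) := by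
  rw [tendsto_zero_iff_norm_tendsto_zero]
  have h := Real.tendsto_pow_mul_exp_neg_atTop_nhds_zero n
  have h2 := tendsto_rpow_mul_exp_neg_mul_atTop_nhds_zero n b hb
  refine h2.congr' ?_
  filter_upwards [eventually_gt_atTop 0] with x hx
  rw [norm_mul, norm_pow, Complex.norm_exp]
  simp [abs_of_pos hx]

open Complex in
lemma half_ne {b : ℝ} (hb : 0 < b) (t : ℝ) : (b : ℂ) - I * t ≠ 0 := by
  intro h
  have := congrArg Complex.re h
  simp at this
  linarith

open Complex in
lemma half_eq (n : ℕ) {b : ℝ} (hb : 0 < b) (t : ℝ) :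
    ∫ x in Set.Ioi (0:ℝ), (x : ℂ) ^ n * cexp (-((b : ℂ) - I * t) * x)
      = n.factorial / ((b : ℂ) - I * t) ^ (n + 1) := by
  have hz := half_ne hb t
  have hd : ∀ x : ℝ, HasDerivAt (fun x : ℝ => cexp (-((b : ℂ) - I * t) * x))
      (cexp (-((b : ℂ) - I * t) * x) * (-((b : ℂ) - I * t))) x := by
    intro x
    have : HasDerivAt (fun x : ℝ => -((b : ℂ) - I * t) * (x : ℂ)) (-((b : ℂ) - I * t) * 1) x :=
      (hasDerivAt_id x).ofReal_comp.const_mul _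
    rw [mul_one] at this
    exact this.cexp
  induction n with
  | zero =>
    have h := integral_Ioi_of_hasDerivAt_of_tendsto' (a := (0:ℝ)) (fun x _ => hd x)
      (by simpa [IntegrableOn] using (half_int 0 hb t).mul_const (-((b : ℂ) - I * t)))
      (by simpa using half_tend 0 hb t)
    rw [integral_mul_const] at h
    simp only [pow_zero, one_mul, Nat.factorial_zero, Nat.cast_one, zero_add, pow_one]
    rw [eq_div_iff hz]
    simp only [ofReal_zero, mul_zero, Complex.exp_zero] at h
    linear_combination -h
  | succ n ih =>
    have hd2 : ∀ x : ℝ, HasDerivAt (fun x : ℝ => (x:ℂ) ^ (n+1) * cexp (-((b : ℂ) - I * t) * x))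
      ((n + 1) * ((x:ℂ) ^ n * cexp (-((b : ℂ) - I * t) * x)) +
        (-((b : ℂ) - I * t)) * ((x:ℂ) ^ (n+1) * cexp (-((b : ℂ) - I * t) * x))) x := by
      intro x
      have h1 : HasDerivAt (fun x : ℝ => (x:ℂ) ^ (n+1)) ((n+1) * (x:ℂ)^n) x := by
        refine (((hasDerivAt_id x).ofReal_comp).fun_pow (n+1)).congr_deriv ?_
        simp
      refine (h1.fun_mul (hd x)).congr_deriv ?_
      ring
    have i1 := (half_int n hb t).const_mul ((n:ℂ) + 1)
    have i2 := (half_int (n+1) hb t).const_mul (-((b : ℂ) - I * t))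
    have h := integral_Ioi_of_hasDerivAt_of_tendsto' (a := (0:ℝ)) (fun x _ => hd2 x)
      (i1.add i2)
      (half_tend (n+1) hb t)
    rw [integral_add i1 i2, integral_const_mul, integral_const_mul, ih] at h
    simp only [ofReal_zero, ne_eq, Nat.add_eq_zero_iff, one_ne_zero, and_false, not_false_eq_true, zero_pow,
      zero_mul, sub_zero] at h
    rw [eq_div_iff (pow_ne_zero _ hz)]
    rw [Nat.factorial_succ]
    push_cast
    have h' : ((b : ℂ) - I * t) * ∫ x in Set.Ioi (0:ℝ), (x : ℂ) ^ (n+1) * cexp (-((b : ℂ) - I * t) * x)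
        = (n+1) * (n.factorial / ((b : ℂ) - I * t) ^ (n + 1)) := by linear_combination -h
    rw [pow_succ, mul_comm, mul_assoc, h']
    field_simp

/-- explicit transforms -/
noncomputable def AA (b e : ℝ) (n : ℕ) (t : ℝ) : ℂ :=
  n.factorial / ((b : ℂ) - Complex.I * t) ^ (n + 1)
    + (e : ℂ) ^ n * (n.factorial / ((b : ℂ) + Complex.I * t) ^ (n + 1))

open Complex in
lemma FT_A (n : ℕ) {b : ℝ} (hb : 0 < b) (e : ℝ) (φ : ℝ → ℂ)
    (h1 : ∀ x : ℝ, 0 < x → φ x = (x:ℂ) ^ n * cexp (-b * x))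
    (h2 : ∀ x : ℝ, 0 < x → φ (-x) = (e:ℂ) ^ n * ((x:ℂ) ^ n * cexp (-b * x))) (t : ℝ) :
    Integrable (fun x : ℝ => cexp (I * t * x) * φ x) ∧
    ∫ x : ℝ, cexp (I * t * x) * φ x = AA b e n t := by
  have e1 : Set.EqOn (fun x : ℝ => (x : ℂ) ^ n * cexp (-((b : ℂ) - I * t) * x))
      (fun x : ℝ => cexp (I * t * x) * φ x) (Set.Ioi 0) := by
    intro x hx
    simp only
    rw [h1 x hx, mul_left_comm, ← Complex.exp_add]
    ring_nf
  have e2 : Set.EqOn (fun x : ℝ => (e:ℂ)^n * ((x : ℂ) ^ n * cexp (-((b : ℂ) - I * (-t : ℝ)) * x)))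
      (fun x : ℝ => cexp (I * t * (-x : ℝ)) * φ (-x)) (Set.Ioi 0) := by
    intro x hx
    simp only
    rw [h2 x hx, mul_left_comm (cexp _), mul_left_comm (cexp _), ← Complex.exp_add]
    push_cast
    ring_nf
  have j1 : IntegrableOn (fun x : ℝ => cexp (I * t * x) * φ x) (Set.Ioi 0) :=
    (half_int n hb t).congr_fun e1 measurableSet_Ioi
  have j2' : IntegrableOn (fun x : ℝ => cexp (I * t * (-x : ℝ)) * φ (-x)) (Set.Ioi 0) :=
    IntegrableOn.congr_fun ((half_int n hb (-t)).const_mul _) e2 measurableSet_Ioi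
  have j2 : IntegrableOn (fun x : ℝ => cexp (I * t * x) * φ x) (Set.Iic 0) := by
    rw [integrableOn_Iic_iff_integrableOn_Iio]
    rw [← neg_zero (G := ℝ)] at j2'
    simpa using j2'.comp_neg_Iio
  have k := integral_comp_neg_Ioi 0 (fun x : ℝ => cexp (I * t * x) * φ x)
  rw [neg_zero] at k
  constructor
  · rw [← integrableOn_univ, ← Set.Iic_union_Ioi (a := (0:ℝ))]
    exact j2.union j1
  · rw [← intervalIntegral.integral_Iic_add_Ioi j2 j1, ← k,
      ← setIntegral_congr_fun measurableSet_Ioi e1, ← setIntegral_congr_fun measurableSet_Ioi e2,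
      integral_const_mul, half_eq n hb, half_eq n hb, AA, add_comm]
    simp

lemma laguerre_eq (n : ℕ) (t : ℝ) : laguerreFourier n t = AA 1 (-1) n t := by
  rw [← (FT_A n one_pos (-1) (fun x : ℝ => (x : ℂ) ^ n * Complex.exp (-(|x| : ℝ))) ?_ ?_ t).2,
    laguerreFourier]
  · simp only [mul_assoc]
  · intro x hx
    simp [abs_of_pos hx]
  · intro x hx
    simp only [abs_neg, abs_of_pos hx]
    push_cast
    rw [neg_pow]
    simp [mul_assoc]

open Complex in
lemma norm_z {b : ℝ} (_hb : 0 < b) (t : ℝ) : ‖(b : ℂ) - I * t‖ ^ 2 = b ^ 2 + t ^ 2 ∧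
    ‖(b : ℂ) + I * t‖ ^ 2 = b ^ 2 + t ^ 2 ∧ b ≤ ‖(b : ℂ) - I * t‖ ∧ b ≤ ‖(b : ℂ) + I * t‖ := by
  refine ⟨?_, ?_, ?_, ?_⟩
  · rw [← Complex.normSq_eq_norm_sq, Complex.normSq_apply]; simp; ring
  · rw [← Complex.normSq_eq_norm_sq, Complex.normSq_apply]; simp; ring
  · have := Complex.re_le_norm ((b : ℂ) - I * t); simpa using this
  · have := Complex.re_le_norm ((b : ℂ) + I * t); simpa using this

open Complex in
lemma AA_bound {b e : ℝ} (hb : 0 < b) (he : |e| = 1) (n : ℕ) (t : ℝ) :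
    ‖AA b e n t‖ ≤ (2 * b * n.factorial / b ^ n) * (b ^ 2 + t ^ 2)⁻¹ := by
  obtain ⟨s1, s2, l1, l2⟩ := norm_z hb t
  have hz1 := half_ne hb t
  have hz2 : (b : ℂ) + I * t ≠ 0 := by simpa using half_ne hb (-t)
  have hp : 0 < b ^ 2 + t ^ 2 := by positivity
  rcases n with _ | m
  · have : AA b e 0 t = ((2 * b * (b ^ 2 + t ^ 2)⁻¹ : ℝ) : ℂ) := by
      unfold AA
      have h3 : ((b:ℂ) ^ 2 + t ^ 2) = ((b : ℂ) - I * t) * ((b : ℂ) + I * t) := by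
        ring_nf; simp
      push_cast
      rw [h3]
      simp
      field_simp
      ring
    rw [this, Complex.norm_real, Real.norm_of_nonneg (by positivity)]
    simp
  · have key : ∀ z : ℂ, ‖z‖ ^ 2 = b ^ 2 + t ^ 2 → b ≤ ‖z‖ →
      ‖((m+1).factorial : ℂ) / z ^ (m+1+1)‖ ≤ (b * (m+1).factorial / b ^ (m+1)) * (b ^ 2 + t ^ 2)⁻¹ := by
      intro z hz hbz
      rw [norm_div, norm_pow, Complex.norm_natCast, pow_add ‖z‖ m 2, ← hz]
      have hz0 : 0 < ‖z‖ := hb.trans_le hbz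
      have : b * ((m+1).factorial : ℝ) / b ^ (m+1) = (m+1).factorial / b ^ m := by
        field_simp
        ring
      rw [this, ← div_eq_mul_inv, div_div]
      gcongr
    have a1 := key _ s1 l1
    have a2 := key _ s2 l2
    unfold AA
    refine (norm_add_le _ _).trans ?_
    rw [norm_mul, norm_pow, Complex.norm_real, Real.norm_eq_abs, he, one_pow, one_mul]
    refine (add_le_add a1 a2).trans (le_of_eq ?_)
    ring

lemma int_B {b : ℝ} (hb : 0 < b) : Integrable (fun t : ℝ => (b ^ 2 + t ^ 2)⁻¹) := by
  have := (integrable_inv_one_add_sq.comp_div hb.ne').const_mul ((b^2)⁻¹)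
  refine this.congr (Filter.Eventually.of_forall fun t => ?_)
  simp only
  rw [← mul_inv]
  field_simp

lemma AA_cont {b : ℝ} (hb : 0 < b) (e : ℝ) (n : ℕ) : Continuous (AA b e n) := by
  unfold AA
  have hz1 := half_ne hb
  have hz2 : ∀ t : ℝ, (b : ℂ) + Complex.I * t ≠ 0 := fun t => by simpa using half_ne hb (-t)
  refine Continuous.add ?_ (continuous_const.mul ?_)
  · exact continuous_const.div (by fun_prop) fun t => pow_ne_zero _ (hz1 t)
  · exact continuous_const.div (by fun_prop) fun t => pow_ne_zero _ (hz2 t)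

lemma AA_int {b e : ℝ} (hb : 0 < b) (he : |e| = 1) (n : ℕ) : Integrable (AA b e n) := by
  refine Integrable.mono' ((int_B hb).const_mul (2 * b * n.factorial / b ^ n))
    (AA_cont hb e n).aestronglyMeasurable (Filter.Eventually.of_forall fun t => AA_bound hb he n t)

/-- L1 membership -/
def InS (S : Submodule ℂ (ℝ →₁[volume] ℂ)) (f : ℝ → ℂ) : Prop :=
  ∃ h : Integrable f volume, h.toL1 f ∈ S

lemma InS.smul {S : Submodule ℂ (ℝ →₁[volume] ℂ)} {f : ℝ → ℂ} (h : InS S f) (c : ℂ) :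
    InS S (fun t => c * f t) := by
  obtain ⟨h, h2⟩ := h
  exact ⟨h.const_mul c, S.smul_mem c h2⟩

lemma InS.sum {S : Submodule ℂ (ℝ →₁[volume] ℂ)} {f : ℕ → ℝ → ℂ} (h : ∀ k, InS S (f k)) (N : ℕ) :
    InS S (fun t => ∑ k ∈ Finset.range N, f k t) := by
  induction N with
  | zero =>
    simp only [Finset.range_zero, Finset.sum_empty]
    exact ⟨integrable_zero ℝ ℂ volume, S.zero_mem⟩
  | succ N ih =>
    obtain ⟨a, b⟩ := ih
    obtain ⟨c, d⟩ := h N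
    simp only [Finset.sum_range_succ]
    exact ⟨a.add c, S.add_mem b d⟩

open Filter Topology in
lemma series {S : Submodule ℂ (ℝ →₁[volume] ℂ)} (hS : IsClosed (S : Set (ℝ →₁[volume] ℂ)))
    (f : ℕ → ℝ → ℂ) (c : ℕ → ℝ) (hc : Summable c) (B : ℝ → ℝ) (hB : Integrable B)
    (hf : ∀ k, InS S (f k)) (hb : ∀ k t, ‖f k t‖ ≤ c k * B t)
    (F : ℝ → ℂ) (hF : ∀ t, HasSum (fun k => f k t) (F t)) : InS S F := by
  have hlim : ∀ t, Tendsto (fun N => ∑ k ∈ Finset.range N, f k t) atTop (𝓝 (F t)) :=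
    fun t => (hF t).tendsto_sum_nat
  have hsum := InS.sum hf
  have hmeas : AEStronglyMeasurable F volume :=
    aestronglyMeasurable_of_tendsto_ae atTop (fun N => (hsum N).1.aestronglyMeasurable)
      (Eventually.of_forall hlim)
  have hsb : ∀ t, Summable (fun k => c k * B t) := fun t => hc.mul_right _
  have hbF : ∀ t, ‖F t‖ ≤ (∑' k, c k) * B t := fun t => by
    rw [← tsum_mul_right, ← (hF t).tsum_eq]
    exact tsum_of_norm_bounded (hsb t).hasSum (fun k => hb k t)
  have hbN : ∀ N t, ‖∑ k ∈ Finset.range N, f k t‖ ≤ (∑' k, c k) * B t := fun N t => by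
    rw [← tsum_mul_right]
    refine (norm_sum_le _ _).trans ((Finset.sum_le_sum fun k _ => hb k t).trans ?_)
    exact (hsb t).sum_le_tsum _ (fun k _ => (norm_nonneg _).trans (hb k t))
  have hFi : Integrable F := Integrable.mono' (hB.const_mul _) hmeas (Eventually.of_forall hbF)
  refine ⟨hFi, ?_⟩
  have ht : Tendsto (fun N => (hsum N).1.toL1 _) atTop (𝓝 (hFi.toL1 F)) := by
    rw [tendsto_iff_norm_sub_tendsto_zero]
    have e : ∀ N, ‖(hsum N).1.toL1 _ - hFi.toL1 F‖
        = ∫ t, ‖(∑ k ∈ Finset.range N, f k t) - F t‖ := by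
      intro N
      rw [← Integrable.toL1_sub, L1.norm_of_fun_eq_integral_norm]
      rfl
    simp only [e]
    have := tendsto_integral_of_dominated_convergence
      (F := fun N t => ‖(∑ k ∈ Finset.range N, f k t) - F t‖) (f := fun _ => 0) (μ := volume)
      (fun t => 2 * ((∑' k, c k) * B t))
      (fun N => (((hsum N).1.sub hFi).norm).aestronglyMeasurable)
      ((hB.const_mul _).const_mul _)
      (fun N => Eventually.of_forall fun t => by
        rw [norm_norm]
        refine (norm_sub_le _ _).trans ?_
        linarith [hbN N t, hbF t])
      (Eventually.of_forall fun t => by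
        simpa using ((hlim t).sub_const (F t)).norm)
    simpa using this
  exact hS.mem_of_tendsto ht (Eventually.of_forall fun N => (hsum N).2)

lemma fact_choose (n k : ℕ) : ((n + k).factorial : ℝ) = (k + n).choose n * n.factorial * k.factorial := by
  have := Nat.add_choose_mul_factorial_mul_factorial k n
  rw [add_comm n k, ← this]
  push_cast
  ring

lemma fact_choose' (n k : ℕ) : ((n + k).factorial : ℂ) = (k + n).choose n * n.factorial * k.factorial := by
  exact_mod_cast fact_choose n k

lemma taylor1 (n : ℕ) (z d : ℂ) (h : ‖d‖ < ‖z‖) :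
    HasSum (fun k : ℕ => d ^ k / k.factorial * ((n+k).factorial / z ^ (n + k + 1)))
      (n.factorial / (z - d) ^ (n + 1)) := by
  have hz : z ≠ 0 := norm_pos_iff.1 ((norm_nonneg d).trans_lt h)
  have hr : ‖d / z‖ < 1 := by
    rw [norm_div]
    exact (div_lt_one (norm_pos_iff.2 hz)).2 h
  have h1 := (hasSum_choose_mul_geometric_of_norm_lt_one n hr).mul_left (n.factorial / z ^ (n+1))
  have e2 : (n.factorial : ℂ) / (z - d) ^ (n + 1)
      = n.factorial / z ^ (n+1) * (1 / (1 - d / z) ^ (n + 1)) := ?_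
  · rw [e2]
    refine h1.congr_fun ?_
    intro k
    rw [fact_choose', div_pow]
    have : (k.factorial : ℂ) ≠ 0 := by exact_mod_cast k.factorial_ne_zero
    field_simp
    ring
  · rw [one_sub_div hz, div_pow]
    have : z - d ≠ 0 := by
      intro h0
      rw [sub_eq_zero.1 h0] at h
      exact lt_irrefl _ h
    field_simp

open Complex in
lemma taylor {S : Submodule ℂ (ℝ →₁[volume] ℂ)} (hS : IsClosed (S : Set (ℝ →₁[volume] ℂ)))
    {b e : ℝ} (hb : 0 < b) (he : |e| = 1) (n : ℕ) (d : ℂ) (hd : ‖d‖ < b)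
    (h : ∀ k, InS S (AA b e (n + k))) :
    InS S (fun t : ℝ => n.factorial / ((b : ℂ) - I * t - d) ^ (n + 1)
      + (e : ℂ) ^ n * (n.factorial / ((b : ℂ) + I * t - e * d) ^ (n + 1))) := by
  refine series hS (fun k t => d ^ k / k.factorial * AA b e (n + k) t)
    (fun k => 2 * b * n.factorial / b ^ n * ((k + n).choose n * (‖d‖ / b) ^ k)) ?_ _ (int_B hb)
    (fun k => (h k).smul _) ?_ _ ?_
  · refine Summable.mul_left _ (summable_choose_mul_geometric_of_norm_lt_one n ?_)
    rw [Real.norm_of_nonneg (by positivity)]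
    exact (div_lt_one hb).2 hd
  · intro k t
    rw [norm_mul, norm_div, norm_pow, Complex.norm_natCast]
    refine (mul_le_mul_of_nonneg_left (AA_bound hb he (n+k) t) (by positivity)).trans (le_of_eq ?_)
    rw [fact_choose, div_pow, pow_add]
    have : (k.factorial : ℝ) ≠ 0 := by exact_mod_cast k.factorial_ne_zero
    field_simp
  · intro t
    obtain ⟨_, _, l1, l2⟩ := norm_z hb t
    have hee : (e:ℂ) * e = 1 := by
      have : e * e = 1 := by rw [← abs_mul_abs_self, he, one_mul]
      exact_mod_cast this
    have t1 := taylor1 n ((b : ℂ) - I * t) d (hd.trans_le l1)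
    have t2 := (taylor1 n ((b : ℂ) + I * t) (e * d) (by
      rw [norm_mul, Complex.norm_real, Real.norm_eq_abs, he, one_mul]
      exact hd.trans_le l2)).mul_left ((e:ℂ)^n)
    refine (t1.add t2).congr_fun ?_
    intro k
    unfold AA
    rw [mul_pow, pow_add (e:ℂ)]
    ring

lemma taylor_translate {S : Submodule ℂ (ℝ →₁[volume] ℂ)} (hS : IsClosed (S : Set (ℝ →₁[volume] ℂ)))
    (h : ∀ n, InS S (AA 1 (-1) n)) (n : ℕ) (s : ℝ) (hs : |s| < 1) :
    InS S (fun t => AA 1 (-1) n (t - s)) := by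
  have := taylor hS one_pos (e := -1) (by simp) n (-(Complex.I * s)) (by simpa using hs) (fun k => h _)
  convert this using 2 with t
  unfold AA
  push_cast
  ring_nf

lemma taylor_scale {S : Submodule ℂ (ℝ →₁[volume] ℂ)} (hS : IsClosed (S : Set (ℝ →₁[volume] ℂ)))
    (h : ∀ n, InS S (AA 2 1 n)) (a : ℝ) (ha : 0 < a) (ha2 : a ≤ 2) :
    InS S (AA a 1 0) := by
  have := taylor hS two_pos (e := 1) (by simp) 0 ((2 - a : ℝ) : ℂ)
    (by rw [Complex.norm_real, Real.norm_of_nonneg (by linarith)]; linarith) (fun k => h _)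
  convert this using 2 with t
  unfold AA
  push_cast
  ring_nf

lemma mp (s : ℝ) : MeasurePreserving (fun t : ℝ => t - s) volume volume :=
  measurePreserving_sub_right volume s

/-- translation -/
noncomputable def TT (s : ℝ) : (ℝ →₁[volume] ℂ) →ₗᵢ[ℂ] (ℝ →₁[volume] ℂ) :=
  Lp.compMeasurePreservingₗᵢ ℂ (fun t : ℝ => t - s) (mp s)

lemma TT_toL1 (s : ℝ) {f : ℝ → ℂ} (hf : Integrable f) :
    TT s (hf.toL1 f) = (hf.comp_sub_right s).toL1 (fun t => f (t - s)) := rfl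

lemma TT_cont (f : ℝ →₁[volume] ℂ) : Continuous (fun s => TT s f) := by
  have := Continuous.compMeasurePreservingLp (μ := (volume : Measure ℝ)) (ν := (volume : Measure ℝ))
    (p := 1) (E := ℂ) (f := fun _ : ℝ => f)
    (g := fun s : ℝ => (⟨fun t : ℝ => t - s, by fun_prop⟩ : C(ℝ, ℝ)))
    continuous_const (by
      apply ContinuousMap.continuous_of_continuous_uncurry
      exact (by fun_prop : Continuous fun p : ℝ × ℝ => p.2 - p.1)) (fun s => mp s) (by simp)
  exact this

/-- the closed span -/
noncomputable def S0 : Submodule ℂ (ℝ →₁[volume] ℂ) :=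
  (Submodule.span ℂ (Set.range fun n =>
    (AA_int one_pos (e := -1) (by simp) n).toL1 (AA 1 (-1) n))).topologicalClosure

lemma S0_closed : IsClosed (S0 : Set (ℝ →₁[volume] ℂ)) :=
  Submodule.isClosed_topologicalClosure _

lemma S0_gen (n : ℕ) : InS S0 (AA 1 (-1) n) :=
  ⟨AA_int one_pos (by simp) n, Submodule.le_topologicalClosure _ (Submodule.subset_span ⟨n, rfl⟩)⟩

lemma S0_tr1 (s : ℝ) (hs : |s| < 1) : S0 ≤ S0.comap (TT s).toLinearMap := by
  refine Submodule.topologicalClosure_minimal _ ?_ (S0_closed.preimage (TT s).continuous)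
  rw [Submodule.span_le]
  rintro _ ⟨n, rfl⟩
  exact (taylor_translate S0_closed S0_gen n s hs).2

lemma S0_tr2 {f : ℝ → ℂ} (hf : InS S0 f) (s : ℝ) (hs : |s| < 1) : InS S0 (fun t => f (t - s)) := by
  obtain ⟨h, h2⟩ := hf
  exact ⟨h.comp_sub_right s, S0_tr1 s hs h2⟩

lemma S0_tr3 {f : ℝ → ℂ} (hf : InS S0 f) (s : ℝ) : InS S0 (fun t => f (t - s)) := by
  obtain ⟨N, hN⟩ := exists_nat_gt |s|
  have hN0 : (0:ℝ) < N := (abs_nonneg s).trans_lt hN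
  have key : ∀ m : ℕ, InS S0 (fun t => f (t - m * (s / N))) := by
    intro m
    induction m with
    | zero => simpa using hf
    | succ m ih =>
      have := S0_tr2 ih (s / N) (by
        rw [abs_div, abs_of_pos hN0]
        exact (div_lt_one hN0).2 hN)
      convert this using 3
      push_cast
      ring
  have := key N
  convert this using 3
  field_simp

lemma S0_tr {f : ℝ →₁[volume] ℂ} (hf : f ∈ S0) (s : ℝ) : TT s f ∈ S0 := by
  have h := L1.integrable_coeFn f
  have e : h.toL1 f = f := Integrable.toL1_coeFn f h
  rw [← e]
  exact (S0_tr3 ⟨h, e.symm ▸ hf⟩ s).2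

lemma conv_int {k : ℝ → ℂ} (hk : Integrable k) (F : ℝ →₁[volume] ℂ) :
    Integrable (fun s => k s • TT s F) := by
  refine Integrable.mono' (hk.norm.mul_const ‖F‖)
    (hk.aestronglyMeasurable.smul (TT_cont F).aestronglyMeasurable)
    (Filter.Eventually.of_forall fun s => ?_)
  rw [norm_smul, (TT s).norm_map]

lemma conv_mem {k : ℝ → ℂ} (hk : Integrable k) {F : ℝ →₁[volume] ℂ} (hF : F ∈ S0) :
    ∫ s, k s • TT s F ∈ S0 := by
  have : CompleteSpace S0 := S0_closed.completeSpace_coe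
  let g : ℝ → S0 := fun s => k s • ⟨TT s F, S0_tr hF s⟩
  have hg : Integrable g := by
    refine Integrable.mono' (hk.norm.mul_const ‖F‖)
      (hk.aestronglyMeasurable.smul
        ((TT_cont F).subtype_mk (fun s => S0_tr hF s)).aestronglyMeasurable)
      (Filter.Eventually.of_forall fun s => ?_)
    change ‖k s • TT s F‖ ≤ _
    rw [norm_smul, (TT s).norm_map]
  have := S0.subtypeL.integral_comp_comm hg
  change ∫ s, k s • TT s F = _ at this
  rw [this]
  exact (∫ s, g s).2

/-- set integral functional -/
noncomputable def LA (A : Set ℝ) : (ℝ →₁[volume] ℂ) →L[ℂ] ℂ where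
  toFun f := ∫ x in A, f x
  map_add' f g := by
    rw [← integral_add (L1.integrable_coeFn f).integrableOn (L1.integrable_coeFn g).integrableOn]
    exact integral_congr_ae (ae_restrict_of_ae (Lp.coeFn_add f g))
  map_smul' c f := by
    rw [RingHom.id_apply, ← integral_smul]
    exact integral_congr_ae (ae_restrict_of_ae (Lp.coeFn_smul c f))
  cont := continuous_setIntegral A

lemma LA_toL1 (A : Set ℝ) {f : ℝ → ℂ} (hf : Integrable f) :
    LA A (hf.toL1 f) = ∫ x in A, f x :=
  integral_congr_ae (ae_restrict_of_ae hf.coeFn_toL1)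

lemma conv_fun_int {k f : ℝ → ℂ} (hk : Integrable k) (hf : Integrable f) :
    Integrable (fun t => ∫ s, k s * f (t - s)) :=
  (hk.convolution_integrand (ContinuousLinearMap.mul ℂ ℂ) hf).integral_prod_left

lemma conv_eq {k f : ℝ → ℂ} (hk : Integrable k) (hf : Integrable f) :
    ∫ s, k s • TT s (hf.toL1 f) = (conv_fun_int hk hf).toL1 (fun t => ∫ s, k s * f (t - s)) := by
  apply Lp.ext
  refine Integrable.ae_eq_of_forall_setIntegral_eq _ _ (L1.integrable_coeFn _)
    (L1.integrable_coeFn _) ?_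
  intro A hA _
  change LA A _ = LA A _
  rw [LA_toL1, ← (LA A).integral_comp_comm (conv_int hk _)]
  have h1 : ∀ s, LA A (k s • TT s (hf.toL1 f)) = ∫ t in A, k s * f (t - s) := by
    intro s
    rw [map_smul, TT_toL1, LA_toL1, integral_const_mul, smul_eq_mul]
  simp only [h1]
  refine (integral_integral_swap ?_).symm
  have := hk.convolution_integrand (ContinuousLinearMap.mul ℂ ℂ) hf
  have h2 := this.restrict (s := A ×ˢ Set.univ)
  rw [← Measure.prod_restrict, Measure.restrict_univ] at h2
  exact h2

lemma conv_InS {k f : ℝ → ℂ} (hk : Integrable k) (hf : InS S0 f) :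
    InS S0 (fun t => ∫ s, k s * f (t - s)) := by
  obtain ⟨h, h2⟩ := hf
  exact ⟨conv_fun_int hk h, conv_eq hk h ▸ conv_mem hk h2⟩

lemma phi_FT (k : ℕ) {b : ℝ} (hb : 0 < b) (t : ℝ) :
    Integrable (fun x : ℝ => Complex.exp (Complex.I * t * x) *
      (((|x| : ℝ) : ℂ) ^ k * Complex.exp (-b * (|x| : ℝ)))) ∧
    ∫ x : ℝ, Complex.exp (Complex.I * t * x) *
      (((|x| : ℝ) : ℂ) ^ k * Complex.exp (-b * (|x| : ℝ))) = AA b 1 k t := by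
  refine FT_A k hb 1 _ ?_ ?_ t
  · intro x hx
    simp [abs_of_pos hx]
  · intro x hx
    simp [abs_of_pos hx]

open FourierTransform in
lemma inversion (k : ℕ) (x : ℝ) :
    ∫ s : ℝ, AA 1 1 k s * Complex.exp (-(Complex.I * s * x))
      = 2 * Real.pi * (((|x| : ℝ) : ℂ) ^ k * Complex.exp (-(|x| : ℝ))) := by
  let φ : ℝ → ℂ := fun x => ((|x| : ℝ) : ℂ) ^ k * Complex.exp (-(|x| : ℝ))
  have hφc : Continuous φ := by
    have : Continuous fun x : ℝ => |x| := continuous_abs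
    fun_prop
  have hφi : Integrable φ := by
    have := (phi_FT k one_pos 0).1
    simpa [φ] using this
  have hF : 𝓕 φ = fun w => AA 1 1 k (-(2 * Real.pi) * w) := by
    ext w
    rw [← (phi_FT k one_pos _).2, Real.fourier_real_eq_integral_exp_smul]
    congr 1
    ext v
    simp only [smul_eq_mul, φ]
    push_cast
    ring_nf
  have hpi : -(2 * Real.pi) ≠ 0 := by
    have := Real.pi_pos
    linarith
  have hFi : Integrable (𝓕 φ) := by
    rw [hF]
    exact (AA_int one_pos (by simp) k).comp_mul_left' hpi
  have h := congrFun (hφc.fourierInv_fourier_eq hφi hFi) x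
  rw [Real.fourierInv_eq', hF] at h
  have h2 := Measure.integral_comp_mul_left
    (fun s : ℝ => AA 1 1 k s * Complex.exp (-(Complex.I * s * x))) (-(2 * Real.pi))
  have h3 : ∫ w : ℝ, AA 1 1 k (-(2 * Real.pi) * w) *
      Complex.exp (-(Complex.I * ((-(2 * Real.pi) * w : ℝ) : ℂ) * x)) = φ x := by
    rw [← h]
    congr 1
    ext w
    simp only [smul_eq_mul, RCLike.inner_apply, conj_trivial]
    rw [mul_comm]
    congr 2
    push_cast
    ring
  rw [h3, abs_inv, abs_neg, abs_of_pos (by positivity)] at h2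
  change _ = 2 * Real.pi * φ x
  rw [h2, Complex.real_smul]
  have : (Real.pi : ℂ) ≠ 0 := by exact_mod_cast Real.pi_ne_zero
  push_cast
  rw [← mul_assoc, mul_inv_cancel₀ (mul_ne_zero two_ne_zero this), one_mul]

lemma AA_zero_eps (b e e' : ℝ) : AA b e 0 = AA b e' 0 := by
  ext t
  simp [AA]

lemma conv_AA (k : ℕ) (t : ℝ) :
    ∫ s, AA 1 1 k s * AA 1 1 0 (t - s) = 2 * Real.pi * AA 2 1 k t := by
  have hA := AA_int one_pos (e := 1) (by simp) k
  have hψ : Integrable (fun x : ℝ => Complex.exp (-(|x| : ℝ))) := by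
    have := (phi_FT 0 one_pos 0).1
    simpa using this
  have h1 : ∀ s, AA 1 1 k s * AA 1 1 0 (t - s) = ∫ x : ℝ, AA 1 1 k s *
      (Complex.exp (Complex.I * (t - s : ℝ) * x) * Complex.exp (-(|x| : ℝ))) := by
    intro s
    rw [integral_const_mul, ← (phi_FT 0 one_pos _).2]
    simp
  simp only [h1]
  rw [integral_integral_swap]
  · rw [← (phi_FT k two_pos t).2, ← integral_const_mul]
    congr 1
    ext x
    have h2 : ∀ s : ℝ, AA 1 1 k s *
      (Complex.exp (Complex.I * (t - s : ℝ) * x) * Complex.exp (-(|x| : ℝ)))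
      = (AA 1 1 k s * Complex.exp (-(Complex.I * s * x))) *
        (Complex.exp (Complex.I * t * x) * Complex.exp (-(|x| : ℝ))) := by
      intro s
      have : Complex.I * (t - s : ℝ) * x = -(Complex.I * s * x) + Complex.I * t * x := by
        push_cast; ring
      rw [this, Complex.exp_add]
      ring
    simp only [h2]
    rw [integral_mul_const, inversion]
    have : Complex.exp (-((2:ℝ):ℂ) * (|x| : ℝ)) = Complex.exp (-(|x| : ℝ)) * Complex.exp (-(|x| : ℝ)) := by
      rw [← Complex.exp_add]
      push_cast
      ring_nf
    rw [this]
    ring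
  · refine Integrable.mono (hA.mul_prod hψ) ?_ (Filter.Eventually.of_forall fun p => ?_)
    · have c1 := AA_cont one_pos 1 k
      have : Continuous fun x : ℝ => |x| := continuous_abs
      exact (by
        simp only [Function.uncurry_def]
        fun_prop : Continuous (Function.uncurry fun (s x : ℝ) => AA 1 1 k s *
      (Complex.exp (Complex.I * (t - s : ℝ) * x) * Complex.exp (-(|x| : ℝ))))).aestronglyMeasurable
    · simp only [Function.uncurry_def, norm_mul]
      have : ‖Complex.exp (Complex.I * (t - p.1 : ℝ) * p.2)‖ = 1 := by
        rw [Complex.norm_exp]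
        simp
      rw [this, one_mul]

lemma S0_two (k : ℕ) : InS S0 (AA 2 1 k) := by
  have h := conv_InS (AA_int one_pos (e := 1) (by simp) k) (AA_zero_eps 1 (-1) 1 ▸ S0_gen 0)
  have h2 := h.smul ((2 * Real.pi : ℂ)⁻¹)
  convert h2 using 2 with t
  rw [conv_AA]
  have : (Real.pi : ℂ) ≠ 0 := by exact_mod_cast Real.pi_ne_zero
  field_simp

lemma S0_a (a : ℝ) (ha : 0 < a) (ha2 : a ≤ 2) : InS S0 (AA a 1 0) :=
  taylor_scale S0_closed S0_two a ha ha2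

lemma AA_zero_formula {a : ℝ} (ha : 0 < a) (u : ℝ) :
    (a : ℂ) * AA a 1 0 (a * u) = ((2 * (1 + u ^ 2)⁻¹ : ℝ) : ℂ) := by
  unfold AA
  have hz1 := half_ne one_pos u
  have hz2 : ((1:ℝ) : ℂ) + Complex.I * u ≠ 0 := by simpa using half_ne one_pos (-u)
  have ha' : (a:ℂ) ≠ 0 := by exact_mod_cast ha.ne'
  have h3 : ((1:ℂ) + u ^ 2) = (((1:ℝ) : ℂ) - Complex.I * u) * (((1:ℝ) : ℂ) + Complex.I * u) := by
    push_cast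
    ring_nf; simp
  have h1 : (a:ℂ) - Complex.I * (a * u : ℝ) = a * (((1:ℝ) : ℂ) - Complex.I * u) := by
    push_cast; ring
  have h2 : (a:ℂ) + Complex.I * (a * u : ℝ) = a * (((1:ℝ) : ℂ) + Complex.I * u) := by
    push_cast; ring
  rw [h1, h2]
  push_cast
  rw [h3]
  push_cast at *
  simp
  field_simp
  ring

lemma approx_mem {g : ℝ → ℂ} (hg : Integrable g) {a : ℝ} (ha : 0 < a) (ha2 : a ≤ 2) :
    ∫ u : ℝ, ((2 * (1 + u ^ 2)⁻¹ : ℝ) : ℂ) • TT (a * u) (hg.toL1 g) ∈ S0 := by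
  have hA := AA_int ha (e := 1) (by simp) 0
  have h1 : ∫ s, AA a 1 0 s • TT s (hg.toL1 g) ∈ S0 := by
    rw [conv_eq hA hg]
    obtain ⟨h, h2⟩ := conv_InS hg (S0_a a ha ha2)
    have e : (fun t => ∫ s, AA a 1 0 s * g (t - s)) = (fun t => ∫ s, g s * AA a 1 0 (t - s)) := by
      ext t
      rw [← integral_sub_left_eq_self _ _ t]
      congr 1
      ext s
      rw [sub_sub_cancel, mul_comm]
    simp only [e]
    exact h2
  have h2 := Measure.integral_comp_mul_left (fun s => AA a 1 0 s • TT s (hg.toL1 g)) a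
  have h3 : ∫ u : ℝ, ((2 * (1 + u ^ 2)⁻¹ : ℝ) : ℂ) • TT (a * u) (hg.toL1 g)
      = (a:ℂ) • ∫ u : ℝ, AA a 1 0 (a * u) • TT (a * u) (hg.toL1 g) := by
    rw [← integral_smul]
    congr 1
    ext1 u
    rw [← AA_zero_formula ha, smul_smul]
  rw [h3, h2]
  refine S0.smul_mem _ ?_
  have := S0.smul_mem ((|a⁻¹| : ℝ) : ℂ) h1
  exact this

lemma TT_zero (f : ℝ →₁[volume] ℂ) : TT 0 f = f := by
  have h := L1.integrable_coeFn f
  have e : h.toL1 f = f := Integrable.toL1_coeFn f h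
  rw [← e, TT_toL1]
  simp

open Filter Topology in
lemma all_mem {g : ℝ → ℂ} (hg : Integrable g volume) : hg.toL1 g ∈ S0 := by
  set G := hg.toL1 g with hG
  have hB : Integrable (fun u : ℝ => ((2 * (1 + u ^ 2)⁻¹ : ℝ) : ℂ)) :=
    (integrable_inv_one_add_sq.const_mul 2).ofReal
  have ht : Tendsto (fun n : ℕ => ∫ u : ℝ, ((2 * (1 + u ^ 2)⁻¹ : ℝ) : ℂ) •
      TT ((1 / ((n:ℝ) + 1)) * u) G) atTop (𝓝 (∫ u : ℝ, ((2 * (1 + u ^ 2)⁻¹ : ℝ) : ℂ) • G)) := by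
    refine tendsto_integral_of_dominated_convergence
      (fun u => ‖((2 * (1 + u ^ 2)⁻¹ : ℝ) : ℂ)‖ * ‖G‖) ?_ (hB.norm.mul_const _) ?_ ?_
    · intro n
      refine hB.aestronglyMeasurable.smul (Continuous.aestronglyMeasurable ?_)
      exact (TT_cont G).comp (continuous_const.mul continuous_id)
    · intro n
      refine Eventually.of_forall fun u => ?_
      rw [norm_smul, (TT _).norm_map]
    · refine Eventually.of_forall fun u => ?_
      refine Tendsto.const_smul ?_ _
      have h1 : Tendsto (fun n : ℕ => (1 / ((n:ℝ) + 1)) * u) atTop (𝓝 0) := by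
        simpa using (tendsto_one_div_add_atTop_nhds_zero_nat (𝕜 := ℝ)).mul_const u
      have h2 := ((TT_cont G).tendsto 0).comp h1
      rw [TT_zero] at h2
      exact h2
  have hm := S0_closed.mem_of_tendsto ht (Eventually.of_forall fun n => by
    refine approx_mem hg (by positivity) ?_
    have : (1:ℝ) / ((n:ℝ) + 1) ≤ 1 := by
      rw [div_le_one (by positivity)]
      have : (0:ℝ) ≤ n := Nat.cast_nonneg n
      linarith
    linarith)
  rw [integral_smul_const, integral_complex_ofReal, integral_const_mul,
    integral_univ_inv_one_add_sq] at hm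
  have := S0.smul_mem (((2 * Real.pi : ℝ) : ℂ)⁻¹) hm
  rwa [inv_smul_smul₀] at this
  exact_mod_cast (by positivity : (2 * Real.pi) ≠ 0)

/-- The linear span of the Fourier transforms of the functions `x ↦ xⁿ e^{−|x|}` (`n ∈ ℕ`)
is dense in `L¹(ℝ; ℂ)`: every integrable function can be approximated in the `L¹` norm by
finite linear combinations of these Fourier transforms. -/
theorem stmt18 :
    (∀ n : ℕ, Integrable (laguerreFourier n) (volume : Measure ℝ)) ∧
    ∀ g : ℝ → ℂ, Integrable g (volume : Measure ℝ) →
      ∀ ε : ℝ, 0 < ε →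
        ∃ (s : Finset ℕ) (c : ℕ → ℂ),
          ∫ t : ℝ, ‖g t - ∑ n ∈ s, c n * laguerreFourier n t‖ < ε := by
  have hL : ∀ n, laguerreFourier n = AA 1 (-1) n := fun n => funext (laguerre_eq n)
  have hI : ∀ n, Integrable (AA 1 (-1) n) volume := fun n => AA_int one_pos (by simp) n
  refine ⟨fun n => by rw [hL n]; exact hI n, ?_⟩
  intro g hg ε hε
  simp only [hL]
  have h := all_mem hg
  have h' : hg.toL1 g ∈ closure (Submodule.span ℂ (Set.range fun n =>
    (hI n).toL1 (AA 1 (-1) n)) : Set (ℝ →₁[volume] ℂ)) := h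
  obtain ⟨y, hy, hd⟩ := Metric.mem_closure_iff.1 h' ε hε
  obtain ⟨c, rfl⟩ := (Finsupp.mem_span_range_iff_exists_finsupp).1 hy
  refine ⟨c.support, c, ?_⟩
  have key : ∀ s : Finset ℕ, ∃ hi : Integrable (fun t => ∑ n ∈ s, c n * AA 1 (-1) n t) volume,
      ∑ n ∈ s, c n • (hI n).toL1 (AA 1 (-1) n) = hi.toL1 _ := by
    intro s
    induction s using Finset.induction_on with
    | empty =>
      simp only [Finset.sum_empty]
      exact ⟨integrable_zero ℝ ℂ volume, rfl⟩
    | insert a s ha ih =>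
      obtain ⟨hi, e⟩ := ih
      simp only [Finset.sum_insert ha]
      exact ⟨((hI a).const_mul (c a)).add hi, by rw [e]; rfl⟩
  obtain ⟨hi, e⟩ := key c.support
  rw [Finsupp.sum, e, dist_eq_norm, ← Integrable.toL1_sub, L1.norm_of_fun_eq_integral_norm] at hd
  exact hd
end

section
/- Let n ≥ 1. Let μ_n and μ_{2n} be the normalized Haar measures on 𝕋ⁿ and 𝕋²ⁿ respectively, and let {e_m : m ∈ ℤ²ⁿ} be the orthonormal basis of L²(𝕋²ⁿ, μ_{2n}) given by e_m(u) = conj(⟨u, m⟩). Let U be the unitary representation of 𝕋²ⁿ on L²(𝕋²ⁿ, μ_{2n}) with (U(u)φ)(v) = φ(v·conj(u)) (componentwise multiplication). Let M be a POVM on (𝕋ⁿ, ℬ(𝕋ⁿ)) acting on L²(𝕋²ⁿ, μ_{2n}) that is a covariant position difference observable: U(w, z) M(B) U(w, z)* = M(z·conj(w)·B) for all w, z ∈ 𝕋ⁿ and all Borel B ⊆ 𝕋ⁿ. Then there exists a family {ξ_{k,l} : (k,l) ∈ ℤⁿ × ℤⁿ} of unit vectors in ℓ²(ℕ) such that for all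 j, k, l ∈ ℤⁿ and Borel B ⊆ 𝕋ⁿ: ⟨e_{(j−k, k)}, M(B) e_{(j−l, l)}⟩ = ⟨ξ_{j−k, k}, ξ_{j−l, l}⟩ ∫_B ⟨z, k − l⟩ dμ_n(z), and ⟨e_{(a,b)}, M(B) e_{(c,d)}⟩ = 0 whenever a + b ≠ c + d. -/
open MeasureTheory Set

local notation "⟪" x ", " y "⟫" => @inner ℂ _ _ x y

/-- `ℓ²(ℕ)`. -/
noncomputable abbrev ell2 : Type := lp (fun _ : ℕ => ℂ) 2

/-- The character `⟨w, m⟩ = w₁^{m₁} ⋯ w_n^{m_n}` of the torus `𝕋ⁿ`. -/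
noncomputable def torusChar {n : ℕ} (w : Fin n → Circle) (m : Fin n → ℤ) : ℂ :=
  ∏ i, (w i : ℂ) ^ (m i)


lemma aux_embed {ι : Type*} [Countable ι] {H : Type*} [NormedAddCommGroup H]
    [InnerProductSpace ℂ H] [CompleteSpace H] (x : ι → H) :
    ∃ η : ι → ell2, ∀ i k, ⟪η i, η k⟫ = ⟪x i, x k⟫ := by
  let S : Submodule ℂ H := (Submodule.span ℂ (range x)).topologicalClosure
  have hS : TopologicalSpace.IsSeparable (S : Set H) := by
    have := (TopologicalSpace.IsSeparable.span (R := ℂ) (countable_range x).isSeparable).closure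
    exact this
  have : TopologicalSpace.SeparableSpace S := hS.separableSpace
  have : CompleteSpace S := (Submodule.isClosed_topologicalClosure _).completeSpace_coe
  obtain ⟨w, b, hb⟩ := exists_hilbertBasis ℂ S
  have hw : Countable w := by
    have : DiscreteTopology w := by
      refine DiscreteTopology.of_forall_le_dist (r := 1) one_pos ?_
      intro i k hik
      have h1 := b.orthonormal
      have h2 : ‖b i - b k‖ ^ 2 = 2 := by
        rw [@norm_sub_sq ℂ, h1.1, h1.1, h1.2 hik]; norm_num
      have h3 : dist i k = ‖b i - b k‖ := by
        rw [hb, ← dist_eq_norm]; rfl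
      rw [h3]
      nlinarith [norm_nonneg (b i - b k)]
    exact TopologicalSpace.separableSpace_iff_countable.1 inferInstance
  obtain ⟨f, hf⟩ := exists_injective_nat w
  have hN : Orthonormal ℂ (fun i : ℕ => (lp.single 2 i (1:ℂ) : ell2)) := by
    rw [orthonormal_iff_ite]
    intro i k
    rw [lp.inner_single_left]
    simp [lp.single_apply, Pi.single_apply]
  have hO := (hN.comp f hf).orthogonalFamily
  let T := hO.linearIsometry
  have hmem : ∀ i, x i ∈ S := fun i =>
    Submodule.le_topologicalClosure _ (Submodule.subset_span (mem_range_self i))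
  refine ⟨fun i => T (b.repr ⟨x i, hmem i⟩), fun i k => ?_⟩
  rw [T.inner_map_map, b.repr.inner_map_map]
  rfl

lemma aux_kernel {ι : Type*} [Countable ι] (a : ι → ι → ℂ)
    (hherm : ∀ i k, (starRingEnd ℂ) (a k i) = a i k)
    (hpos : ∀ c : ι →₀ ℂ, 0 ≤ (c.sum fun i z => c.sum fun k w =>
      (starRingEnd ℂ) z * w * a i k).re) :
    ∃ η : ι → ell2, ∀ i k, ⟪η i, η k⟫ = a i k := by
  let K : Matrix ι ι (ℂ →L[ℂ] ℂ) := Matrix.of fun i k => (a i k) • ContinuousLinearMap.id ℂ ℂ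
  have hK : K.PosSemidef := by
    have htf := (RKHS.posSemidef_tfae (K := K)).out 0 2
    refine htf.mpr ⟨?_, ?_⟩
    · ext i k
      have hid : ContinuousLinearMap.adjoint (ContinuousLinearMap.id ℂ ℂ)
          = ContinuousLinearMap.id ℂ ℂ := ContinuousLinearMap.adjoint_id
      simp [K, Matrix.conjTranspose_apply, ← hherm i k, ContinuousLinearMap.star_eq_adjoint, hid]
    · intro c
      have := hpos c
      have h2 : (c.sum fun x w => c.sum fun x' w' => ⟪(K x' x) w, w'⟫)
          = c.sum fun i z => c.sum fun k w => (starRingEnd ℂ) z * w * a i k := by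
        refine Finsupp.sum_congr fun i _ => Finsupp.sum_congr fun k _ => ?_
        simp [K, ← hherm i k]
        ring
      rw [h2]
      exact this
  have : Fact K.PosSemidef := ⟨hK⟩
  obtain ⟨η, hη⟩ := aux_embed (fun i => RKHS.kerFun (RKHS.OfKernel K) i (1:ℂ))
  refine ⟨η, fun i k => ?_⟩
  rw [hη, ← RKHS.kernel_inner, RKHS.OfKernel.kernel_ofKernel]
  simp [K, hherm]

lemma tc_mul {n : ℕ} (z w : Fin n → Circle) (m : Fin n → ℤ) :
    torusChar (z * w) m = torusChar z m * torusChar w m := by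
  simp [torusChar, mul_zpow, Finset.prod_mul_distrib]

lemma tc_add {n : ℕ} (z : Fin n → Circle) (m k : Fin n → ℤ) :
    torusChar z (m + k) = torusChar z m * torusChar z k := by
  simp [torusChar, zpow_add₀, Finset.prod_mul_distrib]

lemma tc_zero {n : ℕ} (z : Fin n → Circle) : torusChar z 0 = 1 := by
  simp [torusChar]

lemma tc_one {n : ℕ} (m : Fin n → ℤ) : torusChar 1 m = 1 := by
  simp [torusChar]

lemma tc_norm {n : ℕ} (z : Fin n → Circle) (m : Fin n → ℤ) : ‖torusChar z m‖ = 1 := by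
  unfold torusChar
  rw [norm_prod]
  refine Finset.prod_eq_one fun i _ => ?_
  rw [norm_zpow, Circle.norm_coe, one_zpow]

lemma tc_conj_mul {n : ℕ} (z : Fin n → Circle) (m : Fin n → ℤ) :
    (starRingEnd ℂ) (torusChar z m) * torusChar z m = 1 := by
  rw [mul_comm, Complex.mul_conj, Complex.normSq_eq_norm_sq, tc_norm]; simp

lemma tc_ne {n : ℕ} (z : Fin n → Circle) (m : Fin n → ℤ) : torusChar z m ≠ 0 := by
  rw [← norm_ne_zero_iff, tc_norm]; simp

lemma tc_neg {n : ℕ} (z : Fin n → Circle) (m : Fin n → ℤ) :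
    torusChar z (-m) = (starRingEnd ℂ) (torusChar z m) := by
  apply mul_right_cancel₀ (tc_ne z m)
  rw [tc_conj_mul, ← tc_add]; simp [tc_zero]

lemma tc_inv {n : ℕ} (z : Fin n → Circle) (m : Fin n → ℤ) :
    torusChar z⁻¹ m = (starRingEnd ℂ) (torusChar z m) := by
  apply mul_right_cancel₀ (tc_ne z m)
  rw [tc_conj_mul, ← tc_mul]; simp [tc_one]

lemma tc_sub {n : ℕ} (z : Fin n → Circle) (m k : Fin n → ℤ) :
    torusChar z (m - k) = torusChar z m * (starRingEnd ℂ) (torusChar z k) := by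
  rw [sub_eq_add_neg, tc_add, tc_neg]

lemma tc_cont {n : ℕ} (m : Fin n → ℤ) : Continuous (fun z : Fin n → Circle => torusChar z m) := by
  unfold torusChar
  refine continuous_finsetProd _ fun i _ => ?_
  exact (continuous_subtype_val.comp (continuous_apply i)).zpow₀ (m i) fun a => Or.inl (Circle.coe_ne_zero (a i))

lemma tc_exists {n : ℕ} (m : Fin n → ℤ) (hm : m ≠ 0) :
    ∃ z : Fin n → Circle, torusChar z m ≠ 1 := by
  obtain ⟨i, hi⟩ := Function.ne_iff.1 hm
  refine ⟨Pi.mulSingle i (Circle.exp (Real.pi / m i)), ?_⟩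
  have : torusChar (Pi.mulSingle i (Circle.exp (Real.pi / m i))) m = -1 := by
    unfold torusChar
    rw [Finset.prod_eq_single i]
    · have hi' : (m i : ℂ) ≠ 0 := by exact_mod_cast hi
      rw [Pi.mulSingle_eq_same, Circle.coe_exp, ← Complex.exp_int_mul, ← Complex.exp_pi_mul_I]
      congr 1
      push_cast
      field_simp
    · intro k _ hk
      simp [Pi.mulSingle_eq_of_ne hk]
    · simp
  rw [this]; norm_num

lemma povm_empty {Ω : Type*} [MeasurableSpace Ω] {H : Type*} [NormedAddCommGroup H]
    [InnerProductSpace ℂ H] [CompleteSpace H] (M : POVM Ω H) (φ ψ : H) :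
    ⟪φ, M.toFun ∅ ψ⟫ = 0 := by
  have h := M.m_iUnion (fun _ => ∅) (fun _ => MeasurableSet.empty)
    (fun _ _ _ => by simp [Function.onFun]) φ ψ
  exact (summable_const_iff _).1 h.summable

lemma povm_measure {Ω : Type*} [MeasurableSpace Ω] {H : Type*} [NormedAddCommGroup H]
    [InnerProductSpace ℂ H] [CompleteSpace H] (M : POVM Ω H) (φ : H) :
    ∃ σ : Measure Ω, IsFiniteMeasure σ ∧ ∀ B, MeasurableSet B →
      (σ.real B : ℂ) = ⟪φ, M.toFun B φ⟫ := by
  have hreal : ∀ B, MeasurableSet B → ((⟪φ, M.toFun B φ⟫.re : ℝ) : ℂ) = ⟪φ, M.toFun B φ⟫ := by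
    intro B hB
    have h := (M.isPositive B hB).inner_nonneg_right φ
    have := Complex.nonneg_iff.1 h
    apply Complex.ext <;> simp [← this.2]
  have hnn : ∀ B, MeasurableSet B → 0 ≤ ⟪φ, M.toFun B φ⟫.re := by
    intro B hB
    have h := (M.isPositive B hB).inner_nonneg_right φ
    exact (Complex.nonneg_iff.1 h).1
  let σ : Measure Ω := Measure.ofMeasurable (fun B _ => ENNReal.ofReal ⟪φ, M.toFun B φ⟫.re)
    (by simp [povm_empty]) (by
      intro B hB hd
      have h := Complex.hasSum_re (M.m_iUnion B hB hd φ φ)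
      rw [← h.tsum_eq, ENNReal.ofReal_tsum_of_nonneg (fun k => hnn _ (hB k)) h.summable])
  have hσ : ∀ B, MeasurableSet B → σ B = ENNReal.ofReal ⟪φ, M.toFun B φ⟫.re := fun B hB =>
    Measure.ofMeasurable_apply B hB
  refine ⟨σ, ⟨by rw [hσ _ MeasurableSet.univ]; exact ENNReal.ofReal_lt_top⟩, fun B hB => ?_⟩
  rw [Measure.real, hσ B hB, ENNReal.toReal_ofReal (hnn B hB), hreal B hB]

lemma aux_polar {H : Type*} [NormedAddCommGroup H] [InnerProductSpace ℂ H] (x y : H) :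
    ∃ (v : Fin 4 → H) (c : Fin 4 → ℂ), ∀ T : H →L[ℂ] H,
      ⟪x, T y⟫ = ∑ i, c i * ⟪v i, T (v i)⟫ := by
  refine ⟨![x + y, x - y, x + Complex.I • y, x - Complex.I • y],
    ![1/4, -1/4, -Complex.I/4, Complex.I/4], fun T => ?_⟩
  simp [Fin.sum_univ_four, inner_add_left, inner_add_right, inner_sub_left, inner_sub_right,
    inner_smul_left, inner_smul_right]
  ring_nf
  simp [Complex.I_sq]
  ring_nf

lemma aux_fubini {n : ℕ} (μn : Measure (Fin n → Circle)) [μn.IsHaarMeasure]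
    [IsProbabilityMeasure μn] (σ : Measure (Fin n → Circle)) [IsFiniteMeasure σ]
    (B : Set (Fin n → Circle)) (hB : MeasurableSet B) (m : Fin n → ℤ) :
    Integrable (fun z => torusChar z m * (σ.real ((fun v => z * v) '' B) : ℂ)) μn ∧
    ∫ z, torusChar z m * (σ.real ((fun v => z * v) '' B) : ℂ) ∂μn
      = (∫ z, torusChar z m ∂σ) * ∫ z in B, torusChar z (-m) ∂μn := by
  let F : (Fin n → Circle) → (Fin n → Circle) → ℂ := fun z y =>
    torusChar z m * B.indicator (fun _ => (1:ℂ)) (z⁻¹ * y)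
  have hF : Integrable (Function.uncurry F) (μn.prod σ) := by
    refine Integrable.of_bound (C := 1) ?_ ?_
    · refine Measurable.aestronglyMeasurable ?_
      refine Measurable.mul ((tc_cont m).measurable.comp measurable_fst) ?_
      exact (measurable_const.indicator hB).comp (measurable_fst.inv.mul measurable_snd)
    · refine Filter.Eventually.of_forall fun p => ?_
      simp only [Function.uncurry, F, norm_mul, tc_norm, one_mul]
      refine (norm_indicator_le_norm_self _ _).trans (by simp)
  have h1 : ∀ z, ∫ y, F z y ∂σ = torusChar z m * (σ.real ((fun v => z * v) '' B) : ℂ) := by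
    intro z
    simp only [F]
    rw [integral_const_mul]
    congr 1
    have hs : (fun v => z * v) '' B = (fun y => z⁻¹ * y) ⁻¹' B := by
      rw [image_mul_left]
    have hm : MeasurableSet ((fun y => z⁻¹ * y) ⁻¹' B) := (measurable_const_mul z⁻¹) hB
    have : (fun y => B.indicator (fun _ => (1:ℂ)) (z⁻¹ * y))
      = ((fun y => z⁻¹ * y) ⁻¹' B).indicator (fun _ => (1:ℂ)) := by
      ext y; rfl
    rw [this, integral_indicator_const _ hm, hs]
    simp
  have h2 : ∀ y, ∫ z, F z y ∂μn = torusChar y m * ∫ z in B, torusChar z (-m) ∂μn := by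
    intro y
    rw [← integral_div_left_eq_self (fun z => F z y) μn y, ← integral_indicator hB,
      ← integral_const_mul]
    congr 1
    ext z
    by_cases hz : z ∈ B <;>
      simp [F, hz, div_eq_mul_inv, tc_mul, tc_inv, tc_neg]
  constructor
  · have := hF.integral_prod_left
    simpa only [Function.uncurry_apply_pair, h1] using this
  · have := integral_integral_swap hF
    simp only [h1, h2] at this
    rw [this, integral_mul_const]

lemma aux_cov {n : ℕ} (μn : Measure (Fin n → Circle)) [μn.IsHaarMeasure]
    [IsProbabilityMeasure μn] {H : Type*} [NormedAddCommGroup H]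
    [InnerProductSpace ℂ H] [CompleteSpace H] (M : POVM (Fin n → Circle) H) (x y : H)
    (m : Fin n → ℤ) (h : ∀ z B, MeasurableSet B →
      torusChar z m * ⟪x, M.toFun ((fun v => z * v) '' B) y⟫ = ⟪x, M.toFun B y⟫) :
    ∃ C : ℂ, ∀ B, MeasurableSet B →
      ⟪x, M.toFun B y⟫ = C * ∫ z in B, torusChar z (-m) ∂μn := by
  obtain ⟨v, c, hvc⟩ := aux_polar x y
  choose σ hσf hσ using fun i => povm_measure M (v i)
  refine ⟨∑ i, c i * ∫ z, torusChar z m ∂(σ i), fun B hB => ?_⟩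
  have hm : ∀ z : Fin n → Circle, MeasurableSet ((fun v => z * v) '' B) := by
    intro z
    rw [image_mul_left]
    exact (measurable_const_mul z⁻¹) hB
  have h1 : ∀ z, ⟪x, M.toFun B y⟫
      = ∑ i, c i * (torusChar z m * ((σ i).real ((fun v => z * v) '' B) : ℂ)) := by
    intro z
    rw [← h z B hB, hvc, Finset.mul_sum]
    refine Finset.sum_congr rfl fun i _ => ?_
    rw [hσ i _ (hm z)]; ring
  have h2 : ⟪x, M.toFun B y⟫ = ∫ z, ⟪x, M.toFun B y⟫ ∂μn := by simp
  rw [h2]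
  rw [integral_congr_ae (Filter.Eventually.of_forall h1)]
  rw [integral_finset_sum _ fun i _ => ((aux_fubini μn (σ i) B hB m).1.const_mul _), Finset.sum_mul]
  refine Finset.sum_congr rfl fun i _ => ?_
  rw [integral_const_mul, (aux_fubini μn (σ i) B hB m).2, mul_assoc]

lemma aux_nonneg {n : ℕ} (μn : Measure (Fin n → Circle)) [μn.IsHaarMeasure]
    [IsProbabilityMeasure μn] (g : (Fin n → Circle) → ℂ) (hg : Continuous g)
    (h : ∀ B, MeasurableSet B → 0 ≤ (∫ z in B, g z ∂μn).re) : 0 ≤ (g 1).re := by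
  have hi : Integrable g μn := hg.integrable_of_hasCompactSupport
    (HasCompactSupport.of_compactSpace g)
  have hae : 0 ≤ᵐ[μn] fun z => (g z).re := by
    refine ae_nonneg_of_forall_setIntegral_nonneg hi.re fun s hs _ => ?_
    have := Complex.reCLM.integral_comp_comm (hi.integrableOn (s := s))
    simp only [Complex.reCLM_apply] at this
    exact this.symm ▸ h s hs
  have hd : Dense {z | (0 : ℝ) ≤ (g z).re} := Measure.dense_of_ae hae
  have hc : IsClosed {z | (0 : ℝ) ≤ (g z).re} :=
    isClosed_le continuous_const (Complex.continuous_re.comp hg)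
  have : (1 : Fin n → Circle) ∈ closure {z | (0 : ℝ) ≤ (g z).re} := hd 1
  rwa [hc.closure_eq] at this

lemma tc_integrable {n : ℕ} (μn : Measure (Fin n → Circle)) 
    [IsProbabilityMeasure μn] (m : Fin n → ℤ) : Integrable (fun z => torusChar z m) μn :=
  (tc_cont m).integrable_of_hasCompactSupport (HasCompactSupport.of_compactSpace _)

lemma aux_main_s19 {n : ℕ} (μn : Measure (Fin n → Circle)) [μn.IsHaarMeasure]
    [IsProbabilityMeasure μn] {H : Type*} [NormedAddCommGroup H]
    [InnerProductSpace ℂ H] [CompleteSpace H] (M : POVM (Fin n → Circle) H)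
    (x : (Fin n → ℤ) → H) (K : (Fin n → ℤ) → (Fin n → ℤ) → ℂ)
    (hK : ∀ k l B, MeasurableSet B →
      ⟪x k, M.toFun B (x l)⟫ = K k l * ∫ z in B, torusChar z (k - l) ∂μn) :
    ∃ η : (Fin n → ℤ) → ell2, ∀ i k, ⟪η i, η k⟫ = K i k := by
  apply aux_kernel
  · intro k l
    set D := (starRingEnd ℂ) (K l k) - K k l with hD
    have hz : ∀ B, MeasurableSet B → D * ∫ z in B, torusChar z (k - l) ∂μn = 0 := by
      intro B hB
      have h1 : ⟪x k, M.toFun B (x l)⟫ = (starRingEnd ℂ) ⟪x l, M.toFun B (x k)⟫ := by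
        rw [inner_conj_symm]
        exact ((M.isPositive B hB).isSymmetric _ _).symm
      rw [hK k l B hB, hK l k B hB, map_mul, ← integral_conj] at h1
      have h2 : ∀ z : Fin n → Circle,
          (starRingEnd ℂ) (torusChar z (l - k)) = torusChar z (k - l) := by
        intro z; rw [← tc_neg, neg_sub]
      simp only [h2] at h1
      rw [hD, sub_mul, h1, sub_self]
    have h0 := aux_nonneg μn (fun z => -(starRingEnd ℂ) D * (D * torusChar z (k - l)))
      (continuous_const.mul (continuous_const.mul (tc_cont _))) (by
        intro B hB
        rw [integral_const_mul, integral_const_mul, hz B hB]; simp)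
    simp only [tc_one, mul_one, neg_mul, mul_comm _ D, mul_neg, Complex.mul_conj] at h0
    have h3 : Complex.normSq D ≤ 0 := by simpa using h0
    have h4 : D = 0 := Complex.normSq_eq_zero.1 (le_antisymm h3 (Complex.normSq_nonneg _))
    exact sub_eq_zero.1 h4
  · intro c
    have h0 := aux_nonneg μn (fun z => ∑ i ∈ c.support, ∑ k ∈ c.support,
        (starRingEnd ℂ) (c i) * c k * K i k * torusChar z (i - k))
      (continuous_finsetSum _ fun i _ => continuous_finsetSum _ fun k _ =>
        continuous_const.mul (tc_cont _)) (by
        intro B hB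
        have hint : ∀ i k, Integrable (fun z => (starRingEnd ℂ) (c i) * c k * K i k *
            torusChar z (i - k)) (μn.restrict B) := fun i k =>
          ((tc_integrable μn _).integrableOn).const_mul _
        rw [integral_finsetSum _ fun i _ => integrable_finsetSum _ fun k _ => hint i k]
        have h1 := ((M.isPositive B hB).inner_nonneg_right (∑ i ∈ c.support, c i • x i))
        have h2 := (Complex.nonneg_iff.1 h1).1
        have h5 : ∀ s t : ℂ, 0 ≤ s.re → t = s → 0 ≤ t.re := fun s t hs hst => hst ▸ hs
        refine h5 _ _ h2 ?_
        rw [map_sum, sum_inner]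
        simp only [inner_sum, map_smul, inner_smul_left, inner_smul_right]
        refine Finset.sum_congr rfl fun i _ => ?_
        rw [integral_finsetSum _ fun k _ => hint i k]
        refine Finset.sum_congr rfl fun k _ => ?_
        rw [integral_const_mul, hK i k B hB]
        ring)
    simpa only [tc_one, mul_one, Finsupp.sum] using h0

theorem stmt19 (n : ℕ) (hn : 1 ≤ n)
    -- normalized Haar measures on `𝕋ⁿ` and on `𝕋²ⁿ = 𝕋ⁿ × 𝕋ⁿ`
    (μn : Measure (Fin n → Circle)) (hμn : μn.IsHaarMeasure) (hμnP : IsProbabilityMeasure μn)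
    (μ2n : Measure ((Fin n → Circle) × (Fin n → Circle)))
    (hμ2n : μ2n.IsHaarMeasure) (hμ2nP : IsProbabilityMeasure μ2n)
    -- the orthonormal basis `e_m(u) = conj ⟨u, m⟩` of `L²(𝕋²ⁿ, μ₂ₙ)`
    (e : (Fin n → ℤ) × (Fin n → ℤ) → Lp ℂ 2 μ2n)
    (he : ∀ m : (Fin n → ℤ) × (Fin n → ℤ),
      (e m : ((Fin n → Circle) × (Fin n → Circle)) → ℂ) =ᵐ[μ2n]
        fun u => (starRingEnd ℂ) (torusChar u.1 m.1 * torusChar u.2 m.2))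
    -- the representation `(U(u)φ)(v) = φ(v · conj u)` of `𝕋²ⁿ`
    (U : ((Fin n → Circle) × (Fin n → Circle)) → (Lp ℂ 2 μ2n ≃ₗᵢ[ℂ] Lp ℂ 2 μ2n))
    (hU : ∀ u : (Fin n → Circle) × (Fin n → Circle), ∀ φ : Lp ℂ 2 μ2n,
      (U u φ : ((Fin n → Circle) × (Fin n → Circle)) → ℂ) =ᵐ[μ2n]
        fun v => φ (v * u⁻¹))
    -- `M` is a covariant position difference observable
    (M : POVM (Fin n → Circle) (Lp ℂ 2 μ2n))
    (hMcov : ∀ w z : Fin n → Circle, ∀ B : Set (Fin n → Circle), MeasurableSet B →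
      ∀ φ ψ : Lp ℂ 2 μ2n,
        ⟪(U (w, z) φ : Lp ℂ 2 μ2n),
            M.toFun ((fun v => z * w⁻¹ * v) '' B) (U (w, z) ψ)⟫
          = ⟪φ, M.toFun B ψ⟫) :
    ∃ ξ : (Fin n → ℤ) × (Fin n → ℤ) → ell2,
      (∀ kl : (Fin n → ℤ) × (Fin n → ℤ), ‖ξ kl‖ = 1) ∧
      (∀ j k l : Fin n → ℤ, ∀ B : Set (Fin n → Circle), MeasurableSet B →
        ⟪e (j - k, k), M.toFun B (e (j - l, l))⟫
          = ⟪ξ (j - k, k), ξ (j - l, l)⟫ * ∫ z in B, torusChar z (k - l) ∂μn) ∧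
      (∀ a b c d : Fin n → ℤ, a + b ≠ c + d →
        ∀ B : Set (Fin n → Circle), MeasurableSet B →
          ⟪e (a, b), M.toFun B (e (c, d))⟫ = 0) := by
  have hUe : ∀ u m, U u (e m) = (torusChar u.1 m.1 * torusChar u.2 m.2) • e m := by
    intro u m
    apply Lp.ext
    have h1 := (measurePreserving_mul_right μ2n u⁻¹).quasiMeasurePreserving.ae_eq_comp (he m)
    filter_upwards [hU u (e m), he m, h1, Lp.coeFn_smul (torusChar u.1 m.1 * torusChar u.2 m.2) (e m)]
      with v h2 h3 h4 h5
    rw [h2, h5]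
    simp only [Function.comp] at h4
    rw [h4]
    simp only [Pi.smul_apply, h3, smul_eq_mul, Prod.fst_mul, Prod.snd_mul, Prod.fst_inv,
      Prod.snd_inv, tc_mul, tc_inv, map_mul, Complex.conj_conj]
    ring
  have hnorm : ∀ m, ⟪e m, e m⟫ = 1 := by
    intro m
    rw [L2.inner_def]
    have : (fun a => ⟪(e m : _ → ℂ) a, (e m : _ → ℂ) a⟫) =ᵐ[μ2n] fun _ => (1:ℂ) := by
      filter_upwards [he m] with v hv
      rw [hv, inner_self_eq_norm_sq_to_K]
      simp [tc_norm]
    rw [integral_congr_ae this]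
    simp
  have hcov : ∀ w z B, MeasurableSet B → ∀ a b c d,
      torusChar w (c - a) * torusChar z (d - b) *
        ⟪e (a, b), M.toFun ((fun v => z * w⁻¹ * v) '' B) (e (c, d))⟫
        = ⟪e (a, b), M.toFun B (e (c, d))⟫ := by
    intro w z B hB a b c d
    rw [← hMcov w z B hB, hUe, hUe, map_smul, inner_smul_left, inner_smul_right]
    simp only [tc_sub, map_mul]
    ring
  have hzero : ∀ a b c d : Fin n → ℤ, a + b ≠ c + d →
        ∀ B : Set (Fin n → Circle), MeasurableSet B →
          ⟪e (a, b), M.toFun B (e (c, d))⟫ = 0 := by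
    intro a b c d hne B hB
    obtain ⟨z, hz⟩ := tc_exists (c - a + (d - b)) (by
      intro h; apply hne
      have : c + d - (a + b) = 0 := by rw [← h]; abel
      exact (sub_eq_zero.1 this).symm)
    have h := hcov z z B hB a b c d
    have hid : (fun v => z * z⁻¹ * v) '' B = B := by simp
    rw [hid, ← tc_add] at h
    by_contra h0
    exact hz (mul_right_cancel₀ h0 (by rw [h, one_mul]))
  have hC : ∀ j k l : Fin n → ℤ, ∃ C : ℂ, ∀ B, MeasurableSet B →
      ⟪e (j - k, k), M.toFun B (e (j - l, l))⟫ = C * ∫ z in B, torusChar z (k - l) ∂μn := by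
    intro j k l
    rw [← neg_sub l k]
    refine aux_cov μn M _ _ (l - k) fun z B hB => ?_
    have := hcov 1 z B hB (j - k) k (j - l) l
    simpa [tc_one] using this
  choose K hK using hC
  choose η hη using fun j => aux_main_s19 μn M (fun k => e (j - k, k)) (K j) (hK j)
  refine ⟨fun p => η (p.1 + p.2) p.2, ?_, ?_, hzero⟩
  · rintro ⟨a, b⟩
    have h1 := hK (a + b) b b univ MeasurableSet.univ
    rw [M.normalized] at h1
    simp only [ContinuousLinearMap.one_apply, hnorm, sub_self, tc_zero] at h1
    have h2 : K (a + b) b b = 1 := by simpa using h1.symm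
    have h3 := hη (a + b) b b
    rw [h2, inner_self_eq_norm_sq_to_K] at h3
    have h4 : ‖η (a + b) b‖ ^ 2 = 1 := Complex.ofReal_injective (by simpa using h3)
    exact (pow_eq_one_iff_of_nonneg (norm_nonneg _) two_ne_zero).1 h4
  · intro j k l B hB
    simp only [sub_add_cancel]
    rw [hη, hK j k l B hB]
end
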